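/- There exist constants ν₀ ∈ (0,1) and C > 0, independent of ν, k and λ, such that for every 0 < ν ≤ ν₀, every k = (k₁,k₃) ∈ ℤ² with |k₁| ≥ 1, every λ ∈ ℝ, every F ∈ L²(I), and every solution w ∈ H²(I) of the Orr–Sommerfeld problem with Navier-slip boundary conditions and right-hand side F, one has ν^{3/8}|k₁|^{5/8}( ‖w‖_{L¹} + |k|^{1/2}‖u‖_{L²} ) + ν^{3/4}|k₁|^{1/4}‖w'‖_{L²} + ν^{1/2}|k₁|^{1/2}‖w‖_{L²} ≤ C ‖F‖_{L²}. -/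

import Mathlib

open Real MeasureTheory

noncomputable section

/-- `|k| = sqrt (k₁² + k₃²)` for `k = (k₁,k₃) ∈ ℤ²`. -/
def kabs (k₁ k₃ : ℤ) : ℝ := Real.sqrt ((k₁ : ℝ) ^ 2 + (k₃ : ℝ) ^ 2)

/-- The `L²` norm on the interval `(-1,1)`. -/
def l2 (f : ℝ → ℂ) : ℝ := Real.sqrt (∫ y in (-1:ℝ)..1, ‖f y‖ ^ 2)

/-- The `L¹` norm on the interval `(-1,1)`. -/
def l1 (f : ℝ → ℂ) : ℝ := ∫ y in (-1:ℝ)..1, ‖f y‖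

/-- `‖(∂_y,|k|)f‖_{L²} = (‖f'‖² + |k|²‖f‖²)^{1/2}`; for `f = φ` this
is the `L²` norm of the velocity `u = (∂_yφ, -i|k|φ)`. -/
def hk (k₁ k₃ : ℤ) (f : ℝ → ℂ) : ℝ :=
  Real.sqrt ((∫ y in (-1:ℝ)..1, ‖deriv f y‖ ^ 2) +
    (kabs k₁ k₃) ^ 2 * ∫ y in (-1:ℝ)..1, ‖f y‖ ^ 2)

/-- The Orr–Sommerfeld problem with Navier-slip boundary conditions:
`-ν(∂_y² - |k|²)w + ik₁[(1-y²-λ)w + 2φ] = F` on `[-1,1]`, where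
`(∂_y² - |k|²)φ = w`, `φ(±1) = φ''(±1) = 0`. -/
def OSslip (ν : ℝ) (k₁ k₃ : ℤ) (lam : ℂ) (w φ F : ℝ → ℂ) : Prop :=
  ContDiff ℝ 2 w ∧ ContDiff ℝ 2 φ ∧
  (∀ y ∈ Set.Icc (-1:ℝ) 1,
    -(ν : ℂ) * (deriv (deriv w) y - ((kabs k₁ k₃ : ℝ) : ℂ) ^ 2 * w y) +
      Complex.I * (k₁ : ℂ) * ((1 - (y : ℂ) ^ 2 - lam) * w y + 2 * φ y) = F y) ∧
  (∀ y ∈ Set.Icc (-1:ℝ) 1,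
    deriv (deriv φ) y - ((kabs k₁ k₃ : ℝ) : ℂ) ^ 2 * φ y = w y) ∧
  φ (-1) = 0 ∧ φ 1 = 0 ∧ deriv (deriv φ) (-1) = 0 ∧ deriv (deriv φ) 1 = 0

lemma hd_re {p : ℝ → ℂ} {p1 : ℂ} {y : ℝ} (h : HasDerivAt p p1 y) :
    HasDerivAt (fun y => (p y).re) p1.re y :=
  (Complex.reCLM.hasFDerivAt.comp_hasDerivAt y h)

lemma hd_im {p : ℝ → ℂ} {p1 : ℂ} {y : ℝ} (h : HasDerivAt p p1 y) :
    HasDerivAt (fun y => (p y).im) p1.im y :=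
  (Complex.imCLM.hasFDerivAt.comp_hasDerivAt y h)

lemma nsq (z : ℂ) : ‖z‖ ^ 2 = z.re ^ 2 + z.im ^ 2 := by
  rw [Complex.sq_norm, Complex.normSq_apply]; ring

lemma ii_of {α β : ℝ} (h : α ≤ β) {f : ℝ → ℝ} (hf : ContinuousOn f (Set.Icc α β)) :
    IntervalIntegrable f volume α β :=
  ContinuousOn.intervalIntegrable (by rwa [Set.uIcc_of_le h])

lemma cs_int {α β : ℝ} (h : α ≤ β) {f g : ℝ → ℝ} (hf : ContinuousOn f (Set.Icc α β))
    (hg : ContinuousOn g (Set.Icc α β)) :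
    (∫ y in α..β, f y * g y) ^ 2 ≤ (∫ y in α..β, f y ^ 2) * (∫ y in α..β, g y ^ 2) := by
  have h1 : IntervalIntegrable (fun y => f y ^ 2) volume α β := ii_of h (hf.pow 2)
  have h2 : IntervalIntegrable (fun y => g y ^ 2) volume α β := ii_of h (hg.pow 2)
  have h3 : IntervalIntegrable (fun y => f y * g y) volume α β := ii_of h (hf.mul hg)
  have key : ∀ t : ℝ, 0 ≤ (∫ y in α..β, f y ^ 2) * (t * t) + (2 * ∫ y in α..β, f y * g y) * t
      + ∫ y in α..β, g y ^ 2 := by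
    intro t
    have e : (∫ y in α..β, f y ^ 2) * (t * t) + (2 * ∫ y in α..β, f y * g y) * t
      + ∫ y in α..β, g y ^ 2 = ∫ y in α..β, (t * f y + g y) ^ 2 := by
      have : (fun y => (t * f y + g y) ^ 2) =
          fun y => (t * t) * f y ^ 2 + (2 * t) * (f y * g y) + g y ^ 2 := by
        funext y; ring
      rw [this, intervalIntegral.integral_add ((h1.const_mul _).add (h3.const_mul _)) h2,
        intervalIntegral.integral_add (h1.const_mul _) (h3.const_mul _),
        intervalIntegral.integral_const_mul, intervalIntegral.integral_const_mul]
      ring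
    rw [e]
    exact intervalIntegral.integral_nonneg h (fun y _ => sq_nonneg _)
  have := discrim_le_zero key
  unfold discrim at this
  linarith

lemma exists_le_avg {α β : ℝ} (h : α < β) {g : ℝ → ℝ} (hg : ContinuousOn g (Set.Icc α β)) :
    ∃ c ∈ Set.Icc α β, g c * (β - α) ≤ ∫ y in α..β, g y := by
  obtain ⟨c, hc, hmin⟩ := isCompact_Icc.exists_isMinOn (Set.nonempty_Icc.2 h.le) hg
  refine ⟨c, hc, ?_⟩
  have : ∫ y in α..β, g c ≤ ∫ y in α..β, g y :=
    intervalIntegral.integral_mono_on h.le (by simp) (ii_of h.le hg) (fun y hy => hmin hy)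
  simp at this
  linarith

lemma int_sub_le {α β γ δ : ℝ} (h1 : γ ≤ α) (h2 : α ≤ β) (h3 : β ≤ δ) {g : ℝ → ℝ}
    (hg : ContinuousOn g (Set.Icc γ δ)) (hp : ∀ y ∈ Set.Icc γ δ, 0 ≤ g y) :
    ∫ y in α..β, g y ≤ ∫ y in γ..δ, g y := by
  have hA : ∫ y in γ..δ, g y = (∫ y in γ..α, g y) + (∫ y in α..β, g y) + ∫ y in β..δ, g y := by
    have i1 : IntervalIntegrable g volume γ α :=
      ii_of h1 (hg.mono (Set.Icc_subset_Icc le_rfl (by linarith)))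
    have i2 : IntervalIntegrable g volume α β :=
      ii_of h2 (hg.mono (Set.Icc_subset_Icc (by linarith) (by linarith)))
    have i3 : IntervalIntegrable g volume β δ :=
      ii_of h3 (hg.mono (Set.Icc_subset_Icc (by linarith) (by linarith)))
    rw [intervalIntegral.integral_add_adjacent_intervals i1 i2,
      intervalIntegral.integral_add_adjacent_intervals (i1.trans i2) i3]
  have a1 : 0 ≤ ∫ y in γ..α, g y := intervalIntegral.integral_nonneg h1
    (fun y hy => hp y ⟨hy.1, by linarith [hy.2]⟩)
  have a2 : 0 ≤ ∫ y in β..δ, g y := intervalIntegral.integral_nonneg h3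
    (fun y hy => hp y ⟨by linarith [hy.1], hy.2⟩)
  linarith

/-- weighted Cauchy-Schwarz for the `L¹` norm -/
lemma cs_weight {α β : ℝ} (h : α ≤ β) {ρ g : ℝ → ℝ} (hρ : ContinuousOn ρ (Set.Icc α β))
    (hg : ContinuousOn g (Set.Icc α β)) (hp : ∀ y ∈ Set.Icc α β, 0 < ρ y) :
    (∫ y in α..β, g y) ^ 2 ≤ (∫ y in α..β, (ρ y)⁻¹) * (∫ y in α..β, ρ y * g y ^ 2) := by
  have hs : ContinuousOn (fun y => √(ρ y)) (Set.Icc α β) := hρ.sqrt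
  have hsp : ∀ y ∈ Set.Icc α β, √(ρ y) ≠ 0 := fun y hy => (Real.sqrt_pos.2 (hp y hy)).ne'
  have := cs_int h (f := fun y => (√(ρ y))⁻¹) (g := fun y => √(ρ y) * g y)
    (hs.inv₀ hsp) (hs.mul hg)
  have e1 : ∫ y in α..β, (√(ρ y))⁻¹ * (√(ρ y) * g y) = ∫ y in α..β, g y := by
    apply intervalIntegral.integral_congr
    intro y hy
    rw [Set.uIcc_of_le h] at hy
    have := hsp y hy
    simp only
    field_simp
  have e2 : ∫ y in α..β, (√(ρ y))⁻¹ ^ 2 = ∫ y in α..β, (ρ y)⁻¹ := by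
    apply intervalIntegral.integral_congr
    intro y hy
    rw [Set.uIcc_of_le h] at hy
    simp only [inv_pow, Real.sq_sqrt (hp y hy).le]
  have e3 : ∫ y in α..β, (√(ρ y) * g y) ^ 2 = ∫ y in α..β, ρ y * g y ^ 2 := by
    apply intervalIntegral.integral_congr
    intro y hy
    rw [Set.uIcc_of_le h] at hy
    simp only [mul_pow, Real.sq_sqrt (hp y hy).le]
  rwa [e1, e2, e3] at this

lemma cs_one {α β : ℝ} (h : α ≤ β) {g : ℝ → ℝ} (hg : ContinuousOn g (Set.Icc α β)) :
    (∫ y in α..β, g y) ^ 2 ≤ (β - α) * (∫ y in α..β, g y ^ 2) := by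
  have := cs_weight h (ρ := fun _ => 1) continuousOn_const hg (fun _ _ => one_pos)
  simpa using this

lemma int_mono {α β : ℝ} (h : α ≤ β) {f g : ℝ → ℝ} (hf : ContinuousOn f (Set.Icc α β))
    (hg : ContinuousOn g (Set.Icc α β)) (hfg : ∀ y ∈ Set.Icc α β, f y ≤ g y) :
    ∫ y in α..β, f y ≤ ∫ y in α..β, g y :=
  intervalIntegral.integral_mono_on h (ii_of h hf) (ii_of h hg) hfg

lemma ftc {α β : ℝ} (h : α ≤ β) {G g : ℝ → ℝ} (hg : ContinuousOn g (Set.Icc α β))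
    (hd : ∀ y ∈ Set.Icc α β, HasDerivAt G (g y) y) : ∫ y in α..β, g y = G β - G α :=
  intervalIntegral.integral_eq_sub_of_hasDerivAt (by rwa [Set.uIcc_of_le h]) (ii_of h hg)

lemma int_split {α β γ : ℝ} (h1 : α ≤ β) (h2 : β ≤ γ) {g : ℝ → ℝ}
    (hg : ContinuousOn g (Set.Icc α γ)) :
    ∫ y in α..γ, g y = (∫ y in α..β, g y) + ∫ y in β..γ, g y :=
  (intervalIntegral.integral_add_adjacent_intervals
    (ii_of h1 (hg.mono (Set.Icc_subset_Icc le_rfl h2)))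
    (ii_of h2 (hg.mono (Set.Icc_subset_Icc h1 le_rfl)))).symm

lemma sq_norm_diff {w w1 : ℝ → ℂ} (hw : ∀ y, HasDerivAt w (w1 y) y) (hc : Continuous w1)
    {γ δ y z : ℝ} (hy : y ∈ Set.Icc γ δ) (hz : z ∈ Set.Icc γ δ) :
    ‖w y‖ ^ 2 ≤ ‖w z‖ ^ 2 + 2 * ∫ t in γ..δ, ‖w t‖ * ‖w1 t‖ := by
  have hwc : Continuous w := continuous_iff_continuousAt.2 fun y => (hw y).continuousAt
  have hγδ : γ ≤ δ := hy.1.trans hy.2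
  have main : ∀ α β, γ ≤ α → α ≤ β → β ≤ δ →
      |‖w β‖ ^ 2 - ‖w α‖ ^ 2| ≤ 2 * ∫ t in γ..δ, ‖w t‖ * ‖w1 t‖ := by
    intro α β h1 h2 h3
    have e : ∫ t in α..β, 2 * ((w t).re * (w1 t).re + (w t).im * (w1 t).im)
        = ‖w β‖ ^ 2 - ‖w α‖ ^ 2 := by
      apply ftc h2 (G := fun t => ‖w t‖ ^ 2) (by fun_prop)
      intro t _
      rw [show (fun t => ‖w t‖ ^ 2) = fun t => (w t).re ^ 2 + (w t).im ^ 2 from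
        funext fun t => nsq _]
      refine (((hd_re (hw t)).pow 2).add ((hd_im (hw t)).pow 2)).congr_deriv ?_
      simp; ring
    rw [← e]
    calc _ ≤ ∫ t in α..β, |2 * ((w t).re * (w1 t).re + (w t).im * (w1 t).im)| :=
          intervalIntegral.abs_integral_le_integral_abs h2
      _ ≤ ∫ t in α..β, 2 * (‖w t‖ * ‖w1 t‖) := by
          apply int_mono h2 (by fun_prop) (by fun_prop)
          intro t _
          rw [abs_mul, abs_two]
          gcongr
          apply abs_le_of_sq_le_sq _ (by positivity)
          rw [mul_pow, nsq, nsq]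
          linarith [sq_nonneg ((w t).re * (w1 t).im - (w t).im * (w1 t).re)]
      _ ≤ ∫ t in γ..δ, 2 * (‖w t‖ * ‖w1 t‖) := 
          int_sub_le h1 h2 h3 (by fun_prop) (fun t _ => by positivity)
      _ = _ := by rw [intervalIntegral.integral_const_mul]
  rcases le_total y z with h | h
  · have := abs_le.1 (main y z hy.1 h hz.2); linarith [this.1]
  · have := abs_le.1 (main z y hz.1 h hy.2); linarith [this.2]

/-- increments -/
lemma norm_diff {w w1 : ℝ → ℂ} (hw : ∀ y, HasDerivAt w (w1 y) y) (hc : Continuous w1)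
    {γ δ y z : ℝ} (hy : y ∈ Set.Icc γ δ) (hz : z ∈ Set.Icc γ δ) :
    ‖w y - w z‖ ^ 2 ≤ (δ - γ) * ∫ t in γ..δ, ‖w1 t‖ ^ 2 := by
  have hγδ : γ ≤ δ := hy.1.trans hy.2
  have main : ∀ α β, γ ≤ α → α ≤ β → β ≤ δ →
      ‖w β - w α‖ ^ 2 ≤ (δ - γ) * ∫ t in γ..δ, ‖w1 t‖ ^ 2 := by
    intro α β h1 h2 h3
    have e : ∫ t in α..β, w1 t = w β - w α := 
      intervalIntegral.integral_eq_sub_of_hasDerivAt (fun t _ => hw t) (hc.intervalIntegrable _ _)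
    have e1 : ‖w β - w α‖ ≤ ∫ t in γ..δ, ‖w1 t‖ := by
      rw [← e]
      refine (intervalIntegral.norm_integral_le_integral_norm h2).trans ?_
      exact int_sub_le h1 h2 h3 (by fun_prop) (fun t _ => by positivity)
    calc _ ≤ (∫ t in γ..δ, ‖w1 t‖) ^ 2 := by gcongr
      _ ≤ _ := cs_one hγδ (by fun_prop)
  rcases le_total y z with h | h
  · have := main y z hy.1 h hz.2; rwa [norm_sub_rev] at this
  · exact main z y hz.1 h hy.2

lemma ip_le (z w : ℂ) : |z.re * w.re + z.im * w.im| ≤ ‖z‖ * ‖w‖ := by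
  apply abs_le_of_sq_le_sq _ (by positivity)
  rw [mul_pow, nsq, nsq]
  linarith [sq_nonneg (z.re * w.im - z.im * w.re)]

lemma cont_of_hd {w w1 : ℝ → ℂ} (hw : ∀ y, HasDerivAt w (w1 y) y) : Continuous w :=
  continuous_iff_continuousAt.2 fun y => (hw y).continuousAt

lemma ell_exists {α β K m : ℝ} (h : α < β) (hK : 0 < K) (A B : ℂ) (hA : ‖A‖ ≤ m)
    (hB : ‖B‖ ≤ m) :
    ∃ l l1 : ℝ → ℂ, (∀ y, HasDerivAt l (l1 y) y) ∧ (∀ y, HasDerivAt l1 ((K:ℂ) ^ 2 * l y) y) ∧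
      l α = A ∧ l β = B ∧ ∀ y ∈ Set.Icc α β, ‖l y‖ ≤ m := by
  set D := Real.sinh (K * (β - α)) with hD
  have hDp : 0 < D := Real.sinh_pos_iff.2 (mul_pos hK (by linarith))
  have d1 : ∀ y : ℝ, HasDerivAt (fun y : ℝ => Real.sinh (K * (β - y)) / D)
      (-K * Real.cosh (K * (β - y)) / D) y := by
    intro y
    have : HasDerivAt (fun y : ℝ => K * (β - y)) (-K) y := by
      simpa using ((hasDerivAt_id y).const_sub β).const_mul K
    refine ((this.sinh).div_const D).congr_deriv ?_
    ring
  have d2 : ∀ y : ℝ, HasDerivAt (fun y : ℝ => Real.sinh (K * (y - α)) / D)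
      (K * Real.cosh (K * (y - α)) / D) y := by
    intro y
    have : HasDerivAt (fun y : ℝ => K * (y - α)) K y := by
      simpa using ((hasDerivAt_id y).sub_const α).const_mul K
    refine ((this.sinh).div_const D).congr_deriv ?_
    ring
  have d3 : ∀ y : ℝ, HasDerivAt (fun y : ℝ => -K * Real.cosh (K * (β - y)) / D)
      (K ^ 2 * (Real.sinh (K * (β - y)) / D)) y := by
    intro y
    have : HasDerivAt (fun y : ℝ => K * (β - y)) (-K) y := by
      simpa using ((hasDerivAt_id y).const_sub β).const_mul K
    refine (((this.cosh).const_mul (-K)).div_const D).congr_deriv ?_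
    ring
  have d4 : ∀ y : ℝ, HasDerivAt (fun y : ℝ => K * Real.cosh (K * (y - α)) / D)
      (K ^ 2 * (Real.sinh (K * (y - α)) / D)) y := by
    intro y
    have : HasDerivAt (fun y : ℝ => K * (y - α)) K y := by
      simpa using ((hasDerivAt_id y).sub_const α).const_mul K
    refine (((this.cosh).const_mul K).div_const D).congr_deriv ?_
    ring
  refine ⟨fun y => A * ((Real.sinh (K * (β - y)) / D : ℝ) : ℂ) +
      B * ((Real.sinh (K * (y - α)) / D : ℝ) : ℂ),
    fun y => A * ((-K * Real.cosh (K * (β - y)) / D : ℝ) : ℂ) +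
      B * ((K * Real.cosh (K * (y - α)) / D : ℝ) : ℂ), ?_, ?_, ?_, ?_, ?_⟩
  · intro y
    exact ((d1 y).ofReal_comp.const_mul A).add ((d2 y).ofReal_comp.const_mul B)
  · intro y
    refine (((d3 y).ofReal_comp.const_mul A).add ((d4 y).ofReal_comp.const_mul B)).congr_deriv ?_
    push_cast; ring
  · have : Real.sinh (K * (β - α)) / D = 1 := div_self hDp.ne'
    simp [this]
  · have : Real.sinh (K * (β - α)) / D = 1 := div_self hDp.ne'
    simp [this]
  · intro y hy
    have s1 : 0 ≤ Real.sinh (K * (β - y)) := Real.sinh_nonneg_iff.2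
      (mul_nonneg hK.le (by linarith [hy.2]))
    have s2 : 0 ≤ Real.sinh (K * (y - α)) := Real.sinh_nonneg_iff.2
      (mul_nonneg hK.le (by linarith [hy.1]))
    have s3 : Real.sinh (K * (β - y)) + Real.sinh (K * (y - α)) ≤ D := by
      have : K * (β - α) = K * (β - y) + K * (y - α) := by ring
      rw [hD, this, Real.sinh_add]
      have c1 := Real.one_le_cosh (K * (β - y))
      have c2 := Real.one_le_cosh (K * (y - α))
      nlinarith
    have hm : 0 ≤ m := (norm_nonneg A).trans hA
    calc _ ≤ ‖A * ((Real.sinh (K * (β - y)) / D : ℝ) : ℂ)‖ +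
          ‖B * ((Real.sinh (K * (y - α)) / D : ℝ) : ℂ)‖ := norm_add_le _ _
      _ = ‖A‖ * (Real.sinh (K * (β - y)) / D) + ‖B‖ * (Real.sinh (K * (y - α)) / D) := by
          rw [norm_mul, norm_mul, Complex.norm_of_nonneg (by positivity),
            Complex.norm_of_nonneg (by positivity)]
      _ ≤ m * (Real.sinh (K * (β - y)) / D) + m * (Real.sinh (K * (y - α)) / D) := by
          gcongr
      _ = m * ((Real.sinh (K * (β - y)) + Real.sinh (K * (y - α))) / D) := by ring
      _ ≤ m * 1 := by
          gcongr
          exact (div_le_one hDp).2 s3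
      _ = m := mul_one m

lemma dirichlet_energy {α β K : ℝ} (h : α ≤ β) {p p1 p2 w : ℝ → ℂ}
    (hp : ∀ y, HasDerivAt p (p1 y) y) (hp1 : ∀ y, HasDerivAt p1 (p2 y) y) (hc : Continuous p2)
    (hw : ∀ y ∈ Set.Icc α β, p2 y - (K:ℂ) ^ 2 * p y = w y) (ha : p α = 0) (hb : p β = 0) :
    ∫ y in α..β, ((p y).re * (w y).re + (p y).im * (w y).im) =
      - ∫ y in α..β, (‖p1 y‖ ^ 2 + K ^ 2 * ‖p y‖ ^ 2) := by
  have c0 := cont_of_hd hp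
  have c1 := cont_of_hd hp1
  have e0 : ∫ y in α..β, ((p y).re * (w y).re + (p y).im * (w y).im) =
      ∫ y in α..β, (((p y).re * (p2 y).re + (p y).im * (p2 y).im) - K ^ 2 * ‖p y‖ ^ 2) := by
    apply intervalIntegral.integral_congr
    intro y hy
    rw [Set.uIcc_of_le h] at hy
    simp only [← hw y hy, nsq]
    simp [← Complex.ofReal_pow]
    ring
  have e1 : ∫ y in α..β, (((p y).re * (p2 y).re + (p y).im * (p2 y).im) + ‖p1 y‖ ^ 2) = 0 := by
    rw [ftc h (G := fun y => (p y).re * (p1 y).re + (p y).im * (p1 y).im) (by fun_prop)]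
    · simp [ha, hb]
    · intro y _
      refine (((hd_re (hp y)).mul (hd_re (hp1 y))).add
        ((hd_im (hp y)).mul (hd_im (hp1 y)))).congr_deriv ?_
      rw [nsq]; ring
  rw [e0, ← sub_eq_zero, sub_neg_eq_add, ← intervalIntegral.integral_add]
  · rw [← e1]; congr 1; funext y; ring
  · exact (by fun_prop : Continuous _).intervalIntegrable _ _
  · exact (by fun_prop : Continuous _).intervalIntegrable _ _

lemma decomp {α β K m : ℝ} (h : α < β) (hK : 0 < K) {φ φ1 φ2 w : ℝ → ℂ}
    (hp : ∀ y, HasDerivAt φ (φ1 y) y) (hp1 : ∀ y, HasDerivAt φ1 (φ2 y) y) (hc : Continuous φ2)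
    (hwc : Continuous w)
    (hw : ∀ y ∈ Set.Icc α β, φ2 y - (K:ℂ) ^ 2 * φ y = w y) (ha : ‖φ α‖ ≤ m) (hb : ‖φ β‖ ≤ m) :
    ∃ p p1 p2 : ℝ → ℂ, (∀ y, HasDerivAt p (p1 y) y) ∧ (∀ y, HasDerivAt p1 (p2 y) y) ∧
      Continuous p2 ∧ p α = 0 ∧ p β = 0 ∧ (∀ y ∈ Set.Icc α β, p2 y - (K:ℂ) ^ 2 * p y = w y) ∧
      (∀ y ∈ Set.Icc α β, ‖φ y‖ ≤ m + ‖p y‖) ∧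
      |(∫ y in α..β, ((φ y).re * (w y).re + (φ y).im * (w y).im)) +
        ∫ y in α..β, (‖p1 y‖ ^ 2 + K ^ 2 * ‖p y‖ ^ 2)| ≤ m * ∫ y in α..β, ‖w y‖ := by
  obtain ⟨l, l1, hl, hl1, la, lb, lm⟩ := ell_exists h hK (φ α) (φ β) ha hb
  have c0 := cont_of_hd hp
  have c1 := cont_of_hd hp1
  have cl := cont_of_hd hl
  have q1 : ∀ y, HasDerivAt (fun y => φ y - l y) (φ1 y - l1 y) y := fun y => (hp y).sub (hl y)
  have q2 : ∀ y, HasDerivAt (fun y => φ1 y - l1 y) (φ2 y - (K:ℂ) ^ 2 * l y) y :=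
    fun y => (hp1 y).sub (hl1 y)
  have q3 : Continuous (fun y => φ2 y - (K:ℂ) ^ 2 * l y) := by fun_prop
  have q4 : ∀ y ∈ Set.Icc α β, (φ2 y - (K:ℂ) ^ 2 * l y) - (K:ℂ) ^ 2 * (φ y - l y) = w y := by
    intro y hy; rw [← hw y hy]; ring
  have q5 := dirichlet_energy h.le q1 q2 q3 q4 (by simp [la]) (by simp [lb])
  refine ⟨_, _, _, q1, q2, q3, by simp [la], by simp [lb], q4, ?_, ?_⟩
  · intro y hy
    calc ‖φ y‖ = ‖l y + (φ y - l y)‖ := by congr 1; ring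
      _ ≤ ‖l y‖ + ‖φ y - l y‖ := norm_add_le _ _
      _ ≤ _ := by gcongr; exact lm y hy
  · rw [← sub_neg_eq_add, ← q5, ← intervalIntegral.integral_sub]
    · calc _ ≤ ∫ y in α..β, |((φ y).re * (w y).re + (φ y).im * (w y).im) -
            ((φ y - l y).re * (w y).re + (φ y - l y).im * (w y).im)| :=
          intervalIntegral.abs_integral_le_integral_abs h.le
        _ ≤ ∫ y in α..β, m * ‖w y‖ := by
          apply int_mono h.le (by fun_prop) (by fun_prop)
          intro y hy
          have := ip_le (l y) (w y)
          have e : ((φ y).re * (w y).re + (φ y).im * (w y).im) -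
            ((φ y - l y).re * (w y).re + (φ y - l y).im * (w y).im) =
            (l y).re * (w y).re + (l y).im * (w y).im := by simp; ring
          rw [e]
          refine this.trans ?_
          gcongr
          exact lm y hy
        _ = _ := by rw [intervalIntegral.integral_const_mul]
    · exact (by fun_prop : Continuous _).intervalIntegrable _ _
    · exact (by fun_prop : Continuous _).intervalIntegrable _ _

lemma psi_exists {a c : ℝ} (ha : c ^ 2 < a) {p p1 : ℝ → ℂ}
    (hp : ∀ y, HasDerivAt p (p1 y) y) (hc1 : Continuous p1) :
    ∃ ψ ψ1 : ℝ → ℂ, (∀ y ∈ Set.Icc (-c) c, HasDerivAt ψ (ψ1 y) y) ∧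
      ContinuousOn ψ (Set.Icc (-c) c) ∧ ContinuousOn ψ1 (Set.Icc (-c) c) ∧
      (∀ y ∈ Set.Icc (-c) c, p y = ((a - y ^ 2 : ℝ) : ℂ) * ψ y) ∧
      (∀ y ∈ Set.Icc (-c) c, p1 y = ((a - y ^ 2 : ℝ) : ℂ) * ψ1 y - ((2 * y : ℝ) : ℂ) * ψ y) := by
  have c0 := cont_of_hd hp
  have hV : ∀ y ∈ Set.Icc (-c) c, (a - y ^ 2) ≠ 0 := by
    intro y hy
    have := sq_le_sq' hy.1 hy.2
    exact ne_of_gt (by linarith)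
  have hVc : ∀ y ∈ Set.Icc (-c) c, ((a - y ^ 2 : ℝ) : ℂ) ≠ 0 := fun y hy => by
    exact_mod_cast hV y hy
  have cV : Continuous (fun y : ℝ => ((a - y ^ 2 : ℝ) : ℂ)) := by fun_prop
  have d : ∀ y ∈ Set.Icc (-c) c, HasDerivAt (fun y => p y / ((a - y ^ 2 : ℝ) : ℂ))
      ((p1 y + ((2 * y : ℝ) : ℂ) * (p y / ((a - y ^ 2 : ℝ) : ℂ))) / ((a - y ^ 2 : ℝ) : ℂ)) y := by
    intro y hy
    have dv : HasDerivAt (fun y : ℝ => a - y ^ 2) (-(2 * y)) y := by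
      simpa using ((hasDerivAt_id y).pow 2).const_sub a
    refine ((hp y).div dv.ofReal_comp (hVc y hy)).congr_deriv ?_
    have := hVc y hy
    push_cast at this ⊢
    field_simp
    ring
  refine ⟨_, _, d, ?_, ?_, ?_, ?_⟩
  · exact c0.continuousOn.div cV.continuousOn hVc
  · refine ContinuousOn.div ?_ cV.continuousOn hVc
    refine hc1.continuousOn.add (ContinuousOn.mul (by fun_prop) ?_)
    exact c0.continuousOn.div cV.continuousOn hVc
  · intro y hy
    have := hVc y hy
    field_simp
  · intro y hy
    have := hVc y hy
    field_simp
    ring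

/-- the coercivity identity and the basic bounds -/
lemma coerc_core {a c K : ℝ} (hc : 0 < c) (ha : c ^ 2 < a) {p p1 p2 w ψ ψ1 : ℝ → ℂ}
    (hp : ∀ y, HasDerivAt p (p1 y) y) (hp1 : ∀ y, HasDerivAt p1 (p2 y) y) (hc2 : Continuous p2)
    (hwc : Continuous w)
    (hw : ∀ y ∈ Set.Icc (-c) c, p2 y - (K:ℂ) ^ 2 * p y = w y) (hpa : p (-c) = 0) (hpb : p c = 0)
    (hψ : ∀ y ∈ Set.Icc (-c) c, HasDerivAt ψ (ψ1 y) y)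
    (hψc : ContinuousOn ψ (Set.Icc (-c) c)) (hψ1c : ContinuousOn ψ1 (Set.Icc (-c) c))
    (e0 : ∀ y ∈ Set.Icc (-c) c, p y = ((a - y ^ 2 : ℝ) : ℂ) * ψ y)
    (e1 : ∀ y ∈ Set.Icc (-c) c, p1 y = ((a - y ^ 2 : ℝ) : ℂ) * ψ1 y - ((2 * y : ℝ) : ℂ) * ψ y) :
    ((∫ y in (-c)..c, (a - y ^ 2) * ‖w y‖ ^ 2) -
      2 * ∫ y in (-c)..c, (‖p1 y‖ ^ 2 + K ^ 2 * ‖p y‖ ^ 2) =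
      (∫ y in (-c)..c, (a - y ^ 2) * ‖w y + 2 * ψ y‖ ^ 2) +
      2 * (∫ y in (-c)..c, (a - y ^ 2) ^ 2 * ‖ψ1 y‖ ^ 2) +
      2 * (K ^ 2 * ∫ y in (-c)..c, ‖p y‖ ^ 2)) ∧
    (a * ∫ y in (-c)..c, ‖ψ y‖ ^ 2) ≤ 9 / (2 * a) * (∫ y in (-c)..c, ‖p y‖ ^ 2) +
      2 * (∫ y in (-c)..c, (a - y ^ 2) ^ 2 * ‖ψ1 y‖ ^ 2) ∧
    (∫ y in (-c)..c, (a - y ^ 2) * ‖w y‖ ^ 2) ≤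
      2 * (∫ y in (-c)..c, (a - y ^ 2) * ‖w y + 2 * ψ y‖ ^ 2) +
      8 * (a * ∫ y in (-c)..c, ‖ψ y‖ ^ 2) := by
  have c0 := cont_of_hd hp
  have c1 := cont_of_hd hp1
  have hcc : -c ≤ c := by linarith
  have hap : 0 < a := by nlinarith
  have hVp : ∀ y ∈ Set.Icc (-c) c, 0 < a - y ^ 2 := by
    intro y hy
    have := sq_le_sq' hy.1 hy.2
    linarith
  have e0r : ∀ y ∈ Set.Icc (-c) c, (p y).re = (a - y ^ 2) * (ψ y).re := fun y hy => by
    rw [e0 y hy, Complex.re_ofReal_mul]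
  have e0i : ∀ y ∈ Set.Icc (-c) c, (p y).im = (a - y ^ 2) * (ψ y).im := fun y hy => by
    rw [e0 y hy, Complex.im_ofReal_mul]
  have e1r : ∀ y ∈ Set.Icc (-c) c, (p1 y).re = (a - y ^ 2) * (ψ1 y).re - 2 * y * (ψ y).re :=
    fun y hy => by
      rw [e1 y hy, Complex.sub_re, Complex.re_ofReal_mul, Complex.re_ofReal_mul]
  have e1i : ∀ y ∈ Set.Icc (-c) c, (p1 y).im = (a - y ^ 2) * (ψ1 y).im - 2 * y * (ψ y).im :=
    fun y hy => by
      rw [e1 y hy, Complex.sub_im, Complex.im_ofReal_mul, Complex.im_ofReal_mul]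
  have z0 : ψ (-c) = 0 := by
    have := e0 (-c) ⟨le_rfl, hcc⟩
    rw [hpa] at this
    have h2 := (hVp (-c) ⟨le_rfl, hcc⟩).ne'
    have h3 : ((a - (-c) ^ 2 : ℝ) : ℂ) ≠ 0 := by exact_mod_cast h2
    exact (mul_eq_zero.1 this.symm).resolve_left h3
  have z1 : ψ c = 0 := by
    have := e0 c ⟨hcc, le_rfl⟩
    rw [hpb] at this
    have h2 := (hVp c ⟨hcc, le_rfl⟩).ne'
    have h3 : ((a - c ^ 2 : ℝ) : ℂ) ≠ 0 := by exact_mod_cast h2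
    exact (mul_eq_zero.1 this.symm).resolve_left h3
  have rψ : ContinuousOn (fun y => (ψ y).re) (Set.Icc (-c) c) :=
    Complex.continuous_re.comp_continuousOn hψc
  have iψ : ContinuousOn (fun y => (ψ y).im) (Set.Icc (-c) c) :=
    Complex.continuous_im.comp_continuousOn hψc
  have rψ1 : ContinuousOn (fun y => (ψ1 y).re) (Set.Icc (-c) c) :=
    Complex.continuous_re.comp_continuousOn hψ1c
  have iψ1 : ContinuousOn (fun y => (ψ1 y).im) (Set.Icc (-c) c) :=
    Complex.continuous_im.comp_continuousOn hψ1c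
  -- the total derivative of `y V |ψ|²`
  have F1 : ∫ y in (-c)..c, ((a - 3 * y ^ 2) * ((ψ y).re ^ 2 + (ψ y).im ^ 2) +
      2 * y * (a - y ^ 2) * ((ψ y).re * (ψ1 y).re + (ψ y).im * (ψ1 y).im)) = 0 := by
    rw [ftc hcc (G := fun y => y * (a - y ^ 2) * ((ψ y).re ^ 2 + (ψ y).im ^ 2)) (by fun_prop)]
    · simp [z0, z1]
    · intro y hy
      have dv : HasDerivAt (fun y : ℝ => y * (a - y ^ 2)) (a - 3 * y ^ 2) y := by
        refine ((hasDerivAt_id y).mul (((hasDerivAt_id y).pow 2).const_sub a)).congr_deriv ?_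
        simp; ring
      refine (dv.mul (((hd_re (hψ y hy)).pow 2).add ((hd_im (hψ y hy)).pow 2))).congr_deriv ?_
      simp; ring
  have DE := dirichlet_energy hcc hp hp1 hc2 hw hpa hpb
  have II : ∀ {f : ℝ → ℝ}, ContinuousOn f (Set.Icc (-c) c) →
    IntervalIntegrable f volume (-c) c := fun hf => ii_of hcc hf
  refine ⟨?_, ?_, ?_⟩
  · have i1 := II (f := fun y => (a - y ^ 2) * ‖w y‖ ^ 2) (by fun_prop)
    have i2 := II (f := fun y => (‖p1 y‖ ^ 2 + K ^ 2 * ‖p y‖ ^ 2)) (by fun_prop)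
    have i3 := II (f := fun y => (a - y ^ 2) * ‖w y + 2 * ψ y‖ ^ 2) (by fun_prop)
    have i4 := II (f := fun y => (a - y ^ 2) ^ 2 * ‖ψ1 y‖ ^ 2) (by fun_prop)
    have i5 := II (f := fun y => ‖p y‖ ^ 2) (by fun_prop)
    have i6 := II (f := fun y => ((p y).re * (w y).re + (p y).im * (w y).im)) (by fun_prop)
    have i7 := II (f := fun y => ((a - 3 * y ^ 2) * ((ψ y).re ^ 2 + (ψ y).im ^ 2) +
      2 * y * (a - y ^ 2) * ((ψ y).re * (ψ1 y).re + (ψ y).im * (ψ1 y).im))) (by fun_prop)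
    have key : ∫ y in (-c)..c, ((a - y ^ 2) * ‖w y + 2 * ψ y‖ ^ 2) =
       ∫ y in (-c)..c, ((a - y ^ 2) * ‖w y‖ ^ 2 +
         4 * ((p y).re * (w y).re + (p y).im * (w y).im) +
         2 * (‖p1 y‖ ^ 2 + K ^ 2 * ‖p y‖ ^ 2) - 2 * ((a - y ^ 2) ^ 2 * ‖ψ1 y‖ ^ 2)
         - (2 * K ^ 2) * ‖p y‖ ^ 2 + 4 * ((a - 3 * y ^ 2) * ((ψ y).re ^ 2 + (ψ y).im ^ 2) +
      2 * y * (a - y ^ 2) * ((ψ y).re * (ψ1 y).re + (ψ y).im * (ψ1 y).im))) := by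
      apply intervalIntegral.integral_congr
      intro y hy
      rw [Set.uIcc_of_le hcc] at hy
      simp only [nsq, e0r y hy, e0i y hy, e1r y hy, e1i y hy, Complex.add_re, Complex.add_im]
      simp
      ring
    rw [intervalIntegral.integral_add (((((i1.add (i6.const_mul 4)).add (i2.const_mul 2)).sub
        (i4.const_mul 2)).sub (i5.const_mul _))) (i7.const_mul _),
      intervalIntegral.integral_sub ((((i1.add (i6.const_mul 4)).add (i2.const_mul 2)).sub
        (i4.const_mul 2))) (i5.const_mul _),
      intervalIntegral.integral_sub (((i1.add (i6.const_mul 4)).add (i2.const_mul 2)))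
        (i4.const_mul 2),
      intervalIntegral.integral_add (i1.add (i6.const_mul 4)) (i2.const_mul 2),
      intervalIntegral.integral_add i1 (i6.const_mul 4)] at key
    simp only [intervalIntegral.integral_const_mul] at key
    rw [F1, DE] at key
    rw [key]; ring
  · have i1 := II (f := fun y => ‖ψ y‖ ^ 2) (by fun_prop)
    have i4 := II (f := fun y => (a - y ^ 2) ^ 2 * ‖ψ1 y‖ ^ 2) (by fun_prop)
    have i5 := II (f := fun y => ‖p y‖ ^ 2) (by fun_prop)
    have : ∫ y in (-c)..c, ((a - 3 * y ^ 2) * ((ψ y).re ^ 2 + (ψ y).im ^ 2) +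
      2 * y * (a - y ^ 2) * ((ψ y).re * (ψ1 y).re + (ψ y).im * (ψ1 y).im)) ≤
      ∫ y in (-c)..c, (9 / (2 * a) * ‖p y‖ ^ 2 + 2 * ((a - y ^ 2) ^ 2 * ‖ψ1 y‖ ^ 2)
        - a * ‖ψ y‖ ^ 2) := by
      apply int_mono hcc (by fun_prop) (by fun_prop)
      intro y hy
      have hy2 : y ^ 2 ≤ a := by have := hVp y hy; linarith
      rw [nsq, nsq, nsq, e0r y hy, e0i y hy]
      set V := a - y ^ 2 with hV
      have ey : y ^ 2 = a - V := by rw [hV]; ring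
      have t1 : ∀ x : ℝ, 3 * V * x ^ 2 ≤ a / 2 * x ^ 2 + 9 / (2 * a) * (V * x) ^ 2 := by
        intro x
        have : a / 2 * x ^ 2 + 9 / (2 * a) * (V * x) ^ 2 - 3 * V * x ^ 2 =
          (a * x - 3 * (V * x)) ^ 2 / (2 * a) := by field_simp; ring
        have h2 : 0 ≤ (a * x - 3 * (V * x)) ^ 2 / (2 * a) := by positivity
        linarith
      have t2 : ∀ x g : ℝ, 2 * y * V * (x * g) ≤ a / 2 * x ^ 2 + 2 * (V ^ 2 * g ^ 2) := by
        intro x g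
        have h1 : y ^ 2 / 2 * x ^ 2 ≤ a / 2 * x ^ 2 := by gcongr
        linarith [sq_nonneg (y * x - 2 * (V * g))]
      have a1 := t1 (ψ y).re
      have a2 := t1 (ψ y).im
      have a3 := t2 (ψ y).re (ψ1 y).re
      have a4 := t2 (ψ y).im (ψ1 y).im
      have e : a - 3 * y ^ 2 = 3 * V - 2 * a := by rw [ey]; ring
      rw [e]
      linarith
    rw [F1, intervalIntegral.integral_sub ((i5.const_mul _).add (i4.const_mul _)) (i1.const_mul _),
      intervalIntegral.integral_add (i5.const_mul _) (i4.const_mul _)] at this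
    simp only [intervalIntegral.integral_const_mul] at this
    linarith
  · rw [← intervalIntegral.integral_const_mul, ← intervalIntegral.integral_const_mul,
      ← intervalIntegral.integral_const_mul, ← intervalIntegral.integral_add
        (II (by fun_prop)) (II (by fun_prop))]
    apply int_mono hcc (by fun_prop) (by fun_prop)
    intro y hy
    have h1 := hVp y hy
    have h2 : a - y ^ 2 ≤ a := by linarith [sq_nonneg y]
    simp only [nsq, Complex.add_re, Complex.add_im]
    simp
    have h3 : (a - y ^ 2) * ((ψ y).re ^ 2 + (ψ y).im ^ 2) ≤ a * ((ψ y).re ^ 2 + (ψ y).im ^ 2) := by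
      gcongr
    linarith [mul_nonneg h1.le (sq_nonneg ((w y).re + 4 * (ψ y).re)),
      mul_nonneg h1.le (sq_nonneg ((w y).im + 4 * (ψ y).im))]

lemma coerc1 {a c K : ℝ} (hc : 0 < c) (ha : c ^ 2 < a) (hK : 0 < K) (hKc : 1 / 4 ≤ K * c)
    {p p1 p2 w : ℝ → ℂ}
    (hp : ∀ y, HasDerivAt p (p1 y) y) (hp1 : ∀ y, HasDerivAt p1 (p2 y) y) (hc2 : Continuous p2)
    (hwc : Continuous w)
    (hw : ∀ y ∈ Set.Icc (-c) c, p2 y - (K:ℂ) ^ 2 * p y = w y)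
    (hpa : p (-c) = 0) (hpb : p c = 0) :
    (∫ y in (-c)..c, (a - y ^ 2) * ‖w y‖ ^ 2) ≤
      288 * ((∫ y in (-c)..c, (a - y ^ 2) * ‖w y‖ ^ 2) -
      2 * ∫ y in (-c)..c, (‖p1 y‖ ^ 2 + K ^ 2 * ‖p y‖ ^ 2)) := by
  obtain ⟨ψ, ψ1, h1, h2, h3, h4, h5⟩ := psi_exists ha hp (cont_of_hd hp1)
  obtain ⟨q1, q2, q3⟩ := coerc_core hc ha hp hp1 hc2 hwc hw hpa hpb h1 h2 h3 h4 h5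
  have hcc : -c ≤ c := by linarith
  have hap : 0 < a := by nlinarith
  rw [q1]
  have S0 : 0 ≤ ∫ y in (-c)..c, (a - y ^ 2) * ‖w y + 2 * ψ y‖ ^ 2 := by
    apply intervalIntegral.integral_nonneg hcc
    intro y hy
    have := sq_le_sq' hy.1 hy.2
    exact mul_nonneg (by linarith) (by positivity)
  have D0 : 0 ≤ ∫ y in (-c)..c, (a - y ^ 2) ^ 2 * ‖ψ1 y‖ ^ 2 :=
    intervalIntegral.integral_nonneg hcc (fun y hy => by positivity)
  have P0 : 0 ≤ ∫ y in (-c)..c, ‖p y‖ ^ 2 :=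
    intervalIntegral.integral_nonneg hcc (fun y hy => by positivity)
  have k1 : 9 / (2 * a) ≤ 72 * K ^ 2 := by
    rw [div_le_iff₀ (by positivity)]
    have : 1 / 16 ≤ K ^ 2 * a := by
      have : (1 / 4) ^ 2 ≤ (K * c) ^ 2 := by gcongr
      nlinarith [sq_nonneg K, mul_pos hK hK]
    linarith
  have k2 : 9 / (2 * a) * (∫ y in (-c)..c, ‖p y‖ ^ 2) ≤ 72 * K ^ 2 * ∫ y in (-c)..c, ‖p y‖ ^ 2 := by
    gcongr
  linarith

lemma hardy_half {a c : ℝ} (hc : 0 < c) (ha : c ^ 2 < a) {ψ ψ1 : ℝ → ℂ}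
    (hψ : ∀ y ∈ Set.Icc 0 c, HasDerivAt ψ (ψ1 y) y)
    (hψc : ContinuousOn ψ (Set.Icc 0 c)) (hψ1c : ContinuousOn ψ1 (Set.Icc 0 c)) :
    (∫ y in (0:ℝ)..c, ‖ψ y - ψ 0‖ ^ 2) ≤
      4 / c ^ 2 * ∫ y in (0:ℝ)..c, (a - y ^ 2) ^ 2 * ‖ψ1 y‖ ^ 2 := by
  have rψ : ContinuousOn (fun y => (ψ y).re) (Set.Icc 0 c) :=
    Complex.continuous_re.comp_continuousOn hψc
  have iψ : ContinuousOn (fun y => (ψ y).im) (Set.Icc 0 c) :=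
    Complex.continuous_im.comp_continuousOn hψc
  have rψ1 : ContinuousOn (fun y => (ψ1 y).re) (Set.Icc 0 c) :=
    Complex.continuous_re.comp_continuousOn hψ1c
  have iψ1 : ContinuousOn (fun y => (ψ1 y).im) (Set.Icc 0 c) :=
    Complex.continuous_im.comp_continuousOn hψ1c
  have F1 : ∫ y in (0:ℝ)..c, (-(((ψ y).re - (ψ 0).re) ^ 2 + ((ψ y).im - (ψ 0).im) ^ 2) +
      2 * (c - y) * (((ψ y).re - (ψ 0).re) * (ψ1 y).re + ((ψ y).im - (ψ 0).im) * (ψ1 y).im))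
      = 0 := by
    rw [ftc hc.le (G := fun y => (c - y) * (((ψ y).re - (ψ 0).re) ^ 2 +
      ((ψ y).im - (ψ 0).im) ^ 2)) (by fun_prop)]
    · simp
    · intro y hy
      have dv : HasDerivAt (fun y : ℝ => c - y) (-1) y := (hasDerivAt_id y).const_sub c
      refine (dv.mul ((((hd_re (hψ y hy)).sub_const (ψ 0).re).pow 2).add
        (((hd_im (hψ y hy)).sub_const (ψ 0).im).pow 2))).congr_deriv ?_
      simp; ring
  have i1 : IntervalIntegrable (fun y => ‖ψ y - ψ 0‖ ^ 2) volume 0 c :=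
    ii_of hc.le (by fun_prop)
  have i2 : IntervalIntegrable (fun y => (a - y ^ 2) ^ 2 * ‖ψ1 y‖ ^ 2) volume 0 c :=
    ii_of hc.le (by fun_prop)
  have : ∫ y in (0:ℝ)..c, (-(((ψ y).re - (ψ 0).re) ^ 2 + ((ψ y).im - (ψ 0).im) ^ 2) +
      2 * (c - y) * (((ψ y).re - (ψ 0).re) * (ψ1 y).re + ((ψ y).im - (ψ 0).im) * (ψ1 y).im)) ≤
      ∫ y in (0:ℝ)..c, (2 / c ^ 2 * ((a - y ^ 2) ^ 2 * ‖ψ1 y‖ ^ 2)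
        - (1 / 2) * ‖ψ y - ψ 0‖ ^ 2) := by
    apply int_mono hc.le (by fun_prop) (by fun_prop)
    intro y hy
    obtain ⟨hy1, hy2⟩ := hy
    have b1 : (c - y) ^ 2 * c ^ 2 ≤ (a - y ^ 2) ^ 2 := by
      rw [← mul_pow]
      apply pow_le_pow_left₀ (mul_nonneg (by linarith) hc.le)
      nlinarith
    have b2 : (c - y) ^ 2 ≤ (a - y ^ 2) ^ 2 / c ^ 2 := by
      rw [le_div_iff₀ (by positivity)]; exact b1
    have b3 : 2 / c ^ 2 * ((a - y ^ 2) ^ 2 * ‖ψ1 y‖ ^ 2) =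
      2 * ((a - y ^ 2) ^ 2 / c ^ 2) * ‖ψ1 y‖ ^ 2 := by ring
    rw [b3]
    have b4 : 2 * (c - y) ^ 2 * ‖ψ1 y‖ ^ 2 ≤ 2 * ((a - y ^ 2) ^ 2 / c ^ 2) * ‖ψ1 y‖ ^ 2 := by
      gcongr
    refine le_trans ?_ (sub_le_sub_right b4 _)
    rw [nsq, nsq, Complex.sub_re, Complex.sub_im]
    linarith [sq_nonneg (((ψ y).re - (ψ 0).re) - 2 * ((c - y) * (ψ1 y).re)),
      sq_nonneg (((ψ y).im - (ψ 0).im) - 2 * ((c - y) * (ψ1 y).im))]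
  rw [F1, intervalIntegral.integral_sub (i2.const_mul _) (i1.const_mul _)] at this
  simp only [intervalIntegral.integral_const_mul] at this
  have e : 4 / c ^ 2 * (∫ y in (0:ℝ)..c, (a - y ^ 2) ^ 2 * ‖ψ1 y‖ ^ 2) =
    2 * (2 / c ^ 2 * ∫ y in (0:ℝ)..c, (a - y ^ 2) ^ 2 * ‖ψ1 y‖ ^ 2) := by ring
  linarith

lemma hardy_full {a c : ℝ} (hc : 0 < c) (ha : c ^ 2 < a) {ψ ψ1 : ℝ → ℂ}
    (hψ : ∀ y ∈ Set.Icc (-c) c, HasDerivAt ψ (ψ1 y) y)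
    (hψc : ContinuousOn ψ (Set.Icc (-c) c)) (hψ1c : ContinuousOn ψ1 (Set.Icc (-c) c)) :
    (∫ y in (-c)..c, ‖ψ y - ψ 0‖ ^ 2) ≤
      4 / c ^ 2 * ∫ y in (-c)..c, (a - y ^ 2) ^ 2 * ‖ψ1 y‖ ^ 2 := by
  have s1 : Set.Icc 0 c ⊆ Set.Icc (-c) c := Set.Icc_subset_Icc (by linarith) le_rfl
  have s2 : ∀ y ∈ Set.Icc 0 c, -y ∈ Set.Icc (-c) c := fun y hy =>
    ⟨by linarith [hy.2], by linarith [hy.1]⟩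
  have r := hardy_half hc ha (fun y hy => hψ y (s1 hy)) (hψc.mono s1) (hψ1c.mono s1)
  have l := hardy_half (ψ := fun y => ψ (-y)) (ψ1 := fun y => - ψ1 (-y)) hc ha
    (fun y hy => by
      have := (hψ (-y) (s2 y hy)).scomp y (hasDerivAt_neg y)
      simpa [Function.comp_def] using this)
    (hψc.comp continuous_neg.continuousOn s2) (hψ1c.comp continuous_neg.continuousOn s2).neg
  have l1 : ∫ y in (0:ℝ)..c, ‖ψ (-y) - ψ (-0)‖ ^ 2 = ∫ y in (-c)..0, ‖ψ y - ψ 0‖ ^ 2 := by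
    have := intervalIntegral.integral_comp_neg (a := 0) (b := c) (fun y => ‖ψ y - ψ 0‖ ^ 2)
    simpa using this
  have l2 : ∫ y in (0:ℝ)..c, (a - y ^ 2) ^ 2 * ‖- ψ1 (-y)‖ ^ 2 =
      ∫ y in (-c)..0, (a - y ^ 2) ^ 2 * ‖ψ1 y‖ ^ 2 := by
    have := intervalIntegral.integral_comp_neg (a := 0) (b := c)
      (fun y => (a - y ^ 2) ^ 2 * ‖ψ1 y‖ ^ 2)
    simpa using this
  simp only [l1, l2] at l
  rw [int_split (by linarith : -c ≤ 0) hc.le (by fun_prop),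
    int_split (g := fun y => (a - y ^ 2) ^ 2 * ‖ψ1 y‖ ^ 2) (by linarith : -c ≤ 0) hc.le
      (by fun_prop), mul_add]
  exact add_le_add l r

lemma coerc2 {a c K : ℝ} (hc : 0 < c) (ha : c ^ 2 < a) (ha4 : a ≤ 4 * c ^ 2)
    {p p1 p2 w : ℝ → ℂ}
    (hp : ∀ y, HasDerivAt p (p1 y) y) (hp1 : ∀ y, HasDerivAt p1 (p2 y) y) (hc2 : Continuous p2)
    (hwc : Continuous w)
    (hw : ∀ y ∈ Set.Icc (-c) c, p2 y - (K:ℂ) ^ 2 * p y = w y)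
    (hpa : p (-c) = 0) (hpb : p c = 0) {Q : ℝ}
    (hQ : (∫ y in (-c)..c, (a - y ^ 2) * ‖w y‖ ^ 2) -
      2 * ∫ y in (-c)..c, (‖p1 y‖ ^ 2 + K ^ 2 * ‖p y‖ ^ 2) ≤ Q) :
    0 ≤ Q ∧ 2 * (K ^ 2 * ∫ y in (-c)..c, ‖p y‖ ^ 2) ≤ Q ∧
    (∫ y in (-c)..c, (a - y ^ 2) * ‖w y‖ ^ 2) ≤
      (400 + 32 * c * ∫ y in (-c)..c, (a - y ^ 2)⁻¹) * Q + 32 * c * ‖∫ y in (-c)..c, w y‖ ^ 2 := by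
  obtain ⟨ψ, ψ1, h1, h2, h3, h4, h5⟩ := psi_exists ha hp (cont_of_hd hp1)
  obtain ⟨q1, -, q3⟩ := coerc_core hc ha hp hp1 hc2 hwc hw hpa hpb h1 h2 h3 h4 h5
  have HF := hardy_full hc ha h1 h2 h3
  have hcc : -c ≤ c := by linarith
  have hap : 0 < a := by linarith
  have hVp : ∀ y ∈ Set.Icc (-c) c, 0 < a - y ^ 2 := by
    intro y hy
    have := sq_le_sq' hy.1 hy.2
    linarith
  rw [q1] at hQ
  have S0 : 0 ≤ ∫ y in (-c)..c, (a - y ^ 2) * ‖w y + 2 * ψ y‖ ^ 2 := by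
    apply intervalIntegral.integral_nonneg hcc
    intro y hy
    exact mul_nonneg (hVp y hy).le (by positivity)
  have D0 : 0 ≤ ∫ y in (-c)..c, (a - y ^ 2) ^ 2 * ‖ψ1 y‖ ^ 2 :=
    intervalIntegral.integral_nonneg hcc (fun y hy => by positivity)
  have P0 : 0 ≤ K ^ 2 * ∫ y in (-c)..c, ‖p y‖ ^ 2 :=
    mul_nonneg (sq_nonneg _) (intervalIntegral.integral_nonneg hcc (fun y hy => by positivity))
  have J0 : 0 ≤ ∫ y in (-c)..c, (a - y ^ 2)⁻¹ :=
    intervalIntegral.integral_nonneg hcc (fun y hy => (inv_pos.2 (hVp y hy)).le)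
  set S := ∫ y in (-c)..c, (a - y ^ 2) * ‖w y + 2 * ψ y‖ ^ 2
  set D := ∫ y in (-c)..c, (a - y ^ 2) ^ 2 * ‖ψ1 y‖ ^ 2
  set J := ∫ y in (-c)..c, (a - y ^ 2)⁻¹
  refine ⟨by linarith, by linarith, ?_⟩
  have II : ∀ {f : ℝ → ℝ}, ContinuousOn f (Set.Icc (-c) c) →
    IntervalIntegrable f volume (-c) c := fun hf => ii_of hcc hf
  have IC : ∀ {f : ℝ → ℂ}, ContinuousOn f (Set.Icc (-c) c) →
    IntervalIntegrable f volume (-c) c := fun hf =>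
      ContinuousOn.intervalIntegrable (by rwa [Set.uIcc_of_le hcc])
  -- mean of ψ
  set M := ‖∫ y in (-c)..c, ψ y‖ with hM
  have m1 : 4 * M ^ 2 ≤ 2 * ‖∫ y in (-c)..c, w y‖ ^ 2 + 2 * (J * S) := by
    have e : (2:ℂ) * ∫ y in (-c)..c, ψ y = (∫ y in (-c)..c, (w y + 2 * ψ y)) -
        ∫ y in (-c)..c, w y := by
      rw [intervalIntegral.integral_add (IC (by fun_prop)) (IC (by fun_prop)),
        intervalIntegral.integral_const_mul]; ring
    have n1 : 2 * M ≤ (∫ y in (-c)..c, ‖w y + 2 * ψ y‖) + ‖∫ y in (-c)..c, w y‖ := by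
      have : ‖(2:ℂ) * ∫ y in (-c)..c, ψ y‖ = 2 * M := by rw [norm_mul]; simp [hM]
      rw [← this, e]
      refine (norm_sub_le _ _).trans ?_
      gcongr
      exact intervalIntegral.norm_integral_le_integral_norm hcc
    have n2 := cs_weight hcc (ρ := fun y => a - y ^ 2) (g := fun y => ‖w y + 2 * ψ y‖)
      (by fun_prop) (by fun_prop) hVp
    have n3 : 0 ≤ M := norm_nonneg _
    set X := ∫ y in (-c)..c, ‖w y + 2 * ψ y‖
    set Y := ‖∫ y in (-c)..c, w y‖
    have : (2 * M) ^ 2 ≤ (X + Y) ^ 2 := by gcongr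
    linarith [sq_nonneg (X - Y)]
  -- ψ(0)
  set H := ∫ y in (-c)..c, ‖ψ y - ψ 0‖ ^ 2
  have HD : c * H ≤ 4 * D / c := by
    calc c * H ≤ c * (4 / c ^ 2 * D) := by gcongr
      _ = _ := by field_simp
  have m2 : 4 * c ^ 2 * ‖ψ 0‖ ^ 2 ≤ 2 * M ^ 2 + 16 * D / c := by
    have e : ((2 * c : ℝ) : ℂ) * ψ 0 = (∫ y in (-c)..c, ψ y) - ∫ y in (-c)..c, (ψ y - ψ 0) := by
      rw [intervalIntegral.integral_sub (IC h2) (IC (by fun_prop)),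
        intervalIntegral.integral_const]
      simp only [Complex.real_smul]; push_cast; ring
    have n1 : 2 * c * ‖ψ 0‖ ≤ M + ∫ y in (-c)..c, ‖ψ y - ψ 0‖ := by
      have : ‖((2 * c : ℝ) : ℂ) * ψ 0‖ = 2 * c * ‖ψ 0‖ := by
        rw [norm_mul, Complex.norm_of_nonneg (by positivity)]
      rw [← this, e]
      refine (norm_sub_le _ _).trans ?_
      gcongr
      exact intervalIntegral.norm_integral_le_integral_norm hcc
    have n2 := cs_one hcc (g := fun y => ‖ψ y - ψ 0‖) (by fun_prop)
    set X := ∫ y in (-c)..c, ‖ψ y - ψ 0‖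
    have : (2 * c * ‖ψ 0‖) ^ 2 ≤ (M + X) ^ 2 := by gcongr
    have e2 : 16 * D / c = 4 * (4 * D / c) := by ring
    linarith [sq_nonneg (M - X)]
  have m3 : ∫ y in (-c)..c, ‖ψ y‖ ^ 2 ≤ 4 * c * ‖ψ 0‖ ^ 2 + 2 * H := by
    have : ∫ y in (-c)..c, ‖ψ y‖ ^ 2 ≤ ∫ y in (-c)..c, (2 * ‖ψ 0‖ ^ 2 + 2 * ‖ψ y - ψ 0‖ ^ 2) := by
      apply int_mono hcc (by fun_prop) (by fun_prop)
      intro y _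
      simp only [nsq, Complex.sub_re, Complex.sub_im]
      linarith [sq_nonneg ((ψ y).re - 2 * (ψ 0).re), sq_nonneg ((ψ y).im - 2 * (ψ 0).im)]
    rw [intervalIntegral.integral_add (by simp) (II (by fun_prop)),
      intervalIntegral.integral_const, intervalIntegral.integral_const_mul] at this
    simp only [smul_eq_mul] at this
    linarith
  have Z0 : 0 ≤ ∫ y in (-c)..c, ‖ψ y‖ ^ 2 := 
    intervalIntegral.integral_nonneg hcc (fun y hy => by positivity)
  set Z := ∫ y in (-c)..c, ‖ψ y‖ ^ 2
  have m4 : a * Z ≤ 8 * c * M ^ 2 + 96 * D := by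
    have u1 : a * Z ≤ 4 * c ^ 2 * Z := by gcongr
    have u2 : c ^ 2 * Z ≤ c * (4 * c ^ 2 * ‖ψ 0‖ ^ 2) + 2 * c * (c * H) := by
      linarith [mul_le_mul_of_nonneg_left m3 (sq_nonneg c)]
    have u3 : c * (4 * c ^ 2 * ‖ψ 0‖ ^ 2) ≤ 2 * c * M ^ 2 + 16 * D := by
      calc _ ≤ c * (2 * M ^ 2 + 16 * D / c) := by gcongr
        _ = _ := by field_simp
    have u4 : 2 * c * (c * H) ≤ 8 * D := by
      calc _ ≤ 2 * c * (4 * D / c) := by gcongr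
        _ = _ := by field_simp; ring
    linarith
  have m5 : 8 * c * M ^ 2 ≤ 4 * c * ‖∫ y in (-c)..c, w y‖ ^ 2 + 4 * c * (J * S) := by
    nlinarith
  have m6 : c * (J * S) ≤ c * (J * Q) := by
    gcongr; linarith
  linarith

lemma l2_nonneg (g : ℝ → ℂ) : 0 ≤ l2 g := Real.sqrt_nonneg _
lemma l1_nonneg (g : ℝ → ℂ) : 0 ≤ l1 g :=
  intervalIntegral.integral_nonneg (by norm_num) (fun y _ => norm_nonneg _)
lemma l2_sq (g : ℝ → ℂ) : l2 g ^ 2 = ∫ y in (-1:ℝ)..1, ‖g y‖ ^ 2 :=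
  Real.sq_sqrt (intervalIntegral.integral_nonneg (by norm_num) (fun y _ => by positivity))

lemma l2_prod {f g : ℝ → ℂ} (hf : Continuous f) (hg : Continuous g) {α β : ℝ} (h1 : -1 ≤ α)
    (h2 : α ≤ β) (h3 : β ≤ 1) : ∫ y in α..β, ‖f y‖ * ‖g y‖ ≤ l2 f * l2 g := by
  have e : ∫ y in α..β, ‖f y‖ * ‖g y‖ ≤ ∫ y in (-1:ℝ)..1, ‖f y‖ * ‖g y‖ :=
    int_sub_le h1 h2 h3 (by fun_prop) (fun y _ => by positivity)
  refine e.trans ?_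
  apply le_of_sq_le_sq _ (mul_nonneg (l2_nonneg _) (l2_nonneg _))
  rw [mul_pow, l2_sq, l2_sq]
  exact cs_int (by norm_num) (by fun_prop) (by fun_prop)

lemma l2_sub {f : ℝ → ℂ} (hf : Continuous f) {α β : ℝ} (h1 : -1 ≤ α)
    (h2 : α ≤ β) (h3 : β ≤ 1) : ∫ y in α..β, ‖f y‖ ^ 2 ≤ l2 f ^ 2 := by
  rw [l2_sq]
  exact int_sub_le h1 h2 h3 (by fun_prop) (fun y _ => by positivity)

structure NOS (ε K a s : ℝ) (w w1 w2 φ φ1 φ2 f : ℝ → ℂ) : Prop where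
  hε : 0 < ε
  hK : 1 ≤ K
  hs : s ^ 2 = 1
  hw : ∀ y, HasDerivAt w (w1 y) y
  hw1 : ∀ y, HasDerivAt w1 (w2 y) y
  cw2 : Continuous w2
  hp : ∀ y, HasDerivAt φ (φ1 y) y
  hp1 : ∀ y, HasDerivAt φ1 (φ2 y) y
  cp2 : Continuous φ2
  cf : Continuous f
  eq : ∀ y ∈ Set.Icc (-1:ℝ) 1, -(ε:ℂ) * (w2 y - (K:ℂ) ^ 2 * w y) +
    Complex.I * (s:ℂ) * (((a:ℂ) - (y:ℂ) ^ 2) * w y + 2 * φ y) = f y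
  ell : ∀ y ∈ Set.Icc (-1:ℝ) 1, φ2 y - (K:ℂ) ^ 2 * φ y = w y
  pa : φ (-1) = 0
  pb : φ 1 = 0
  wa : w (-1) = 0
  wb : w 1 = 0

section
variable {ε K a s : ℝ} {w w1 w2 φ φ1 φ2 f : ℝ → ℂ}

lemma NOS.cw (H : NOS ε K a s w w1 w2 φ φ1 φ2 f) : Continuous w := cont_of_hd H.hw
lemma NOS.cw1 (H : NOS ε K a s w w1 w2 φ φ1 φ2 f) : Continuous w1 := cont_of_hd H.hw1
lemma NOS.cp (H : NOS ε K a s w w1 w2 φ φ1 φ2 f) : Continuous φ := cont_of_hd H.hp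
lemma NOS.cp1 (H : NOS ε K a s w w1 w2 φ φ1 φ2 f) : Continuous φ1 := cont_of_hd H.hp1

lemma hd_flip {p p1 : ℝ → ℂ} (h : ∀ y, HasDerivAt p (p1 y) y) (y : ℝ) :
    HasDerivAt (fun y => p (-y)) (- p1 (-y)) y := by
  have := (h (-y)).scomp y (hasDerivAt_neg y)
  simpa [Function.comp_def] using this

lemma NOS.flip (H : NOS ε K a s w w1 w2 φ φ1 φ2 f) :
    NOS ε K a s (fun y => w (-y)) (fun y => - w1 (-y)) (fun y => w2 (-y))
      (fun y => φ (-y)) (fun y => - φ1 (-y)) (fun y => φ2 (-y)) (fun y => f (-y)) where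
  hε := H.hε
  hK := H.hK
  hs := H.hs
  hw := hd_flip H.hw
  hw1 := fun y => ((hd_flip H.hw1 y).neg).congr_deriv (by simp)
  cw2 := H.cw2.comp continuous_neg
  hp := hd_flip H.hp
  hp1 := fun y => ((hd_flip H.hp1 y).neg).congr_deriv (by simp)
  cp2 := H.cp2.comp continuous_neg
  cf := H.cf.comp continuous_neg
  eq := fun y hy => by
    have := H.eq (-y) ⟨by linarith [hy.2], by linarith [hy.1]⟩
    simpa using this
  ell := fun y hy => H.ell (-y) ⟨by linarith [hy.2], by linarith [hy.1]⟩
  pa := by simpa using H.pb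
  pb := by simpa using H.pa
  wa := by simpa using H.wb
  wb := by simpa using H.wa

lemma l2_flip (g : ℝ → ℂ) : l2 (fun y => g (-y)) = l2 g := by
  unfold l2
  rw [intervalIntegral.integral_comp_neg (fun y => ‖g y‖ ^ 2)]
  simp
lemma l2_flip' (g : ℝ → ℂ) : l2 (fun y => - g (-y)) = l2 g := by
  rw [← l2_flip g]; unfold l2; simp

lemma NOS.energy (H : NOS ε K a s w w1 w2 φ φ1 φ2 f) {α β : ℝ} (h1 : -1 ≤ α)
    (h2 : α ≤ β) (h3 : β ≤ 1) :
    |(∫ y in α..β, (a - y ^ 2) * ‖w y‖ ^ 2) +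
      2 * ∫ y in α..β, ((φ y).re * (w y).re + (φ y).im * (w y).im)| ≤
    l2 f * l2 w + ε * (‖w1 α‖ * ‖w α‖ + ‖w1 β‖ * ‖w β‖) := by
  have := H.cw; have := H.cw1; have := H.cp; have := H.cf; have := H.cw2
  have e1 : ∫ y in α..β, ((w2 y).im * (w y).re - (w2 y).re * (w y).im) =
      ((w1 β).im * (w β).re - (w1 β).re * (w β).im) -
      ((w1 α).im * (w α).re - (w1 α).re * (w α).im) := by
    apply ftc h2 (G := fun y => (w1 y).im * (w y).re - (w1 y).re * (w y).im) (by fun_prop)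
    intro y _
    refine (((hd_im (H.hw1 y)).mul (hd_re (H.hw y))).sub
      ((hd_re (H.hw1 y)).mul (hd_im (H.hw y)))).congr_deriv ?_
    ring
  have e2 : (∫ y in α..β, (a - y ^ 2) * ‖w y‖ ^ 2) +
      2 * ∫ y in α..β, ((φ y).re * (w y).re + (φ y).im * (w y).im) =
      s * (∫ y in α..β, ((f y).im * (w y).re - (f y).re * (w y).im)) +
      s * ε * ∫ y in α..β, ((w2 y).im * (w y).re - (w2 y).re * (w y).im) := by
    rw [← intervalIntegral.integral_const_mul, ← intervalIntegral.integral_const_mul,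
      ← intervalIntegral.integral_const_mul, ← intervalIntegral.integral_add
        (ii_of h2 (by fun_prop)) (ii_of h2 (by fun_prop)),
      ← intervalIntegral.integral_add (ii_of h2 (by fun_prop)) (ii_of h2 (by fun_prop))]
    apply intervalIntegral.integral_congr
    intro y hy
    rw [Set.uIcc_of_le h2] at hy
    simp only
    rw [← H.eq y ⟨by linarith [hy.1], by linarith [hy.2]⟩, nsq]
    have hs := H.hs
    simp [pow_two] at hs ⊢
    linear_combination (-((a - y*y)*((w y).re*(w y).re+(w y).im*(w y).im)
      + 2*((φ y).re*(w y).re+(φ y).im*(w y).im))) * hs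
  have sabs : |s| = 1 := by
    have := H.hs
    rw [← sq_abs] at this; nlinarith [abs_nonneg s]
  have c1 : ∀ z v : ℂ, |z.im * v.re - z.re * v.im| ≤ ‖z‖ * ‖v‖ := by
    intro z v
    apply abs_le_of_sq_le_sq _ (by positivity)
    rw [mul_pow, nsq, nsq]
    linarith [sq_nonneg (z.re * v.re + z.im * v.im)]
  have e3 : |∫ y in α..β, ((f y).im * (w y).re - (f y).re * (w y).im)| ≤ l2 f * l2 w := by
    refine (intervalIntegral.abs_integral_le_integral_abs h2).trans ?_
    refine le_trans ?_ (l2_prod H.cf H.cw h1 h2 h3)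
    exact int_mono h2 (by fun_prop) (by fun_prop) (fun y _ => c1 _ _)
  rw [e2, e1]
  refine (abs_add_le _ _).trans ?_
  rw [abs_mul, abs_mul, abs_mul, sabs, abs_of_pos H.hε]
  have hε := H.hε
  have := abs_sub ((w1 β).im * (w β).re - (w1 β).re * (w β).im) 
      ((w1 α).im * (w α).re - (w1 α).re * (w α).im)
  have h4 := c1 (w1 β) (w β)
  have h5 := c1 (w1 α) (w α)
  rw [one_mul, one_mul]
  gcongr
  linarith

lemma NOS.energy_re (H : NOS ε K a s w w1 w2 φ φ1 φ2 f) :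
    ε * (l2 w1 ^ 2 + K ^ 2 * l2 w ^ 2) ≤ l2 f * l2 w := by
  have := H.cw; have := H.cw1; have := H.cp; have := H.cf; have := H.cw2
  have := H.cp1; have := H.cp2
  have h2 : (-1:ℝ) ≤ 1 := by norm_num
  have e1 : ∫ y in (-1:ℝ)..1, ((φ2 y).im * (φ y).re - (φ2 y).re * (φ y).im) = 0 := by
    rw [ftc h2 (G := fun y => (φ1 y).im * (φ y).re - (φ1 y).re * (φ y).im) (by fun_prop)]
    · simp [H.pa, H.pb]
    intro y _
    refine (((hd_im (H.hp1 y)).mul (hd_re (H.hp y))).sub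
      ((hd_re (H.hp1 y)).mul (hd_im (H.hp y)))).congr_deriv ?_
    ring
  have e2 : ∫ y in (-1:ℝ)..1, ((w2 y).re * (w y).re + (w2 y).im * (w y).im + ‖w1 y‖ ^ 2) = 0 := by
    rw [ftc h2 (G := fun y => (w1 y).re * (w y).re + (w1 y).im * (w y).im) (by fun_prop)]
    · simp [H.wa, H.wb]
    intro y _
    refine (((hd_re (H.hw1 y)).mul (hd_re (H.hw y))).add
      ((hd_im (H.hw1 y)).mul (hd_im (H.hw y)))).congr_deriv ?_
    rw [nsq]; ring
  have e3 : ε * (l2 w1 ^ 2 + K ^ 2 * l2 w ^ 2) =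
      ∫ y in (-1:ℝ)..1, ((f y).re * (w y).re + (f y).im * (w y).im) := by
    have : ε * (l2 w1 ^ 2 + K ^ 2 * l2 w ^ 2) = 
       (∫ y in (-1:ℝ)..1, (ε * ‖w1 y‖ ^ 2 + ε * K ^ 2 * ‖w y‖ ^ 2))
       + (-ε) * (∫ y in (-1:ℝ)..1, ((w2 y).re * (w y).re + (w2 y).im * (w y).im + ‖w1 y‖ ^ 2))
       + (2 * s) * ∫ y in (-1:ℝ)..1, ((φ2 y).im * (φ y).re - (φ2 y).re * (φ y).im) := by
      rw [e1, e2, intervalIntegral.integral_add (ii_of h2 (by fun_prop)) (ii_of h2 (by fun_prop)),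
        intervalIntegral.integral_const_mul, intervalIntegral.integral_const_mul, l2_sq, l2_sq]
      ring
    rw [this, ← intervalIntegral.integral_const_mul, ← intervalIntegral.integral_const_mul,
      ← intervalIntegral.integral_add (ii_of h2 (by fun_prop)) (ii_of h2 (by fun_prop)),
      ← intervalIntegral.integral_add (ii_of h2 (by fun_prop)) (ii_of h2 (by fun_prop))]
    apply intervalIntegral.integral_congr
    intro y hy
    rw [Set.uIcc_of_le h2] at hy
    simp only
    rw [← H.eq y hy, nsq (w y)]
    have e := H.ell y hy
    have er := congrArg Complex.re e
    have ei := congrArg Complex.im e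
    simp [pow_two] at er ei ⊢
    rw [← er, ← ei]
    ring
  rw [e3]
  refine le_trans ?_ (l2_prod H.cf H.cw le_rfl h2 le_rfl)
  exact int_mono h2 (by fun_prop) (by fun_prop) (fun y _ => le_of_abs_le (ip_le _ _))

lemma NOS.U_le (H : NOS ε K a s w w1 w2 φ φ1 φ2 f) :
    2 * (∫ y in (-1:ℝ)..1, (‖φ1 y‖ ^ 2 + K ^ 2 * ‖φ y‖ ^ 2)) ≤
      (∫ y in (-1:ℝ)..1, (a - y ^ 2) * ‖w y‖ ^ 2) + l2 f * l2 w := by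
  have h2 : (-1:ℝ) ≤ 1 := by norm_num
  have h := H.energy le_rfl h2 le_rfl
  rw [dirichlet_energy h2 H.hp H.hp1 H.cp2 H.ell H.pa H.pb, H.wa, H.wb] at h
  simp only [norm_zero, mul_zero, add_zero] at h
  have := abs_le.1 h
  linarith [this.1]

end

section
variable {K a s σ : ℝ} {w w1 w2 φ φ1 φ2 f : ℝ → ℂ}

lemma caseA {Γ : ℝ} (hΓ : 1 ≤ Γ) (hσ : 0 < σ)
    (H : NOS (σ ^ 4) K a s w w1 w2 φ φ1 φ2 f) (ha : a ≤ Γ * σ ^ 2) :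
    σ ^ 2 * l2 w ≤ (4 * Γ + 2) * l2 f ∧ 
      σ ^ 3 * l1 w ^ 2 ≤ (4 * (Γ + 1) * (4 * Γ + 2) ^ 2 + 4 * (4 * Γ + 2)) * l2 f ^ 2 := by
  have := H.cw; have := H.cw1; have := H.cp; have := H.cf; have := H.cw2
  have h2 : (-1:ℝ) ≤ 1 := by norm_num
  have W0 := l2_nonneg w
  have F0 := l2_nonneg f
  have hU := H.U_le
  have U0 : 0 ≤ ∫ y in (-1:ℝ)..1, (‖φ1 y‖ ^ 2 + K ^ 2 * ‖φ y‖ ^ 2) :=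
    intervalIntegral.integral_nonneg h2 (fun y _ => by positivity)
  have e1 : ∫ y in (-1:ℝ)..1, (a - y ^ 2) * ‖w y‖ ^ 2 = a * l2 w ^ 2 -
      ∫ y in (-1:ℝ)..1, y ^ 2 * ‖w y‖ ^ 2 := by
    rw [l2_sq, ← intervalIntegral.integral_const_mul, ← intervalIntegral.integral_sub
      (ii_of h2 (by fun_prop)) (ii_of h2 (by fun_prop))]
    congr 1; ext y; ring
  set G := ∫ y in (-1:ℝ)..1, y ^ 2 * ‖w y‖ ^ 2 with hG
  have G0 : 0 ≤ G := intervalIntegral.integral_nonneg h2 (fun y _ => by positivity)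
  have hGle : G ≤ Γ * σ ^ 2 * l2 w ^ 2 + l2 f * l2 w := by
    have : a * l2 w ^ 2 ≤ Γ * σ ^ 2 * l2 w ^ 2 := by gcongr
    linarith
  have e2 : l2 w ^ 2 ≤ 2 * ∫ y in (-1:ℝ)..1, (|y| * ‖w y‖) * ‖w1 y‖ := by
    have z : ∫ y in (-1:ℝ)..1, (‖w y‖ ^ 2 + 2 * y * ((w1 y).re * (w y).re + (w1 y).im * (w y).im))
        = 0 := by
      rw [ftc h2 (G := fun y => y * ((w y).re ^ 2 + (w y).im ^ 2)) (by fun_prop)]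
      · simp [H.wa, H.wb]
      intro y _
      refine ((hasDerivAt_id y).mul (((hd_re (H.hw y)).pow 2).add
        ((hd_im (H.hw y)).pow 2))).congr_deriv ?_
      rw [nsq]; simp; ring
    rw [intervalIntegral.integral_add (ii_of h2 (by fun_prop)) (ii_of h2 (by fun_prop)),
      ← l2_sq] at z
    have : -∫ y in (-1:ℝ)..1, 2 * y * ((w1 y).re * (w y).re + (w1 y).im * (w y).im) ≤
        2 * ∫ y in (-1:ℝ)..1, (|y| * ‖w y‖) * ‖w1 y‖ := by
      rw [← intervalIntegral.integral_neg, ← intervalIntegral.integral_const_mul]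
      apply int_mono h2 (by fun_prop) (by fun_prop)
      intro y _
      refine (neg_le_abs _).trans ?_
      rw [abs_mul, abs_mul, abs_two]
      have := ip_le (w1 y) (w y)
      have : |y| * |(w1 y).re * (w y).re + (w1 y).im * (w y).im| ≤ |y| * (‖w1 y‖ * ‖w y‖) := by
        gcongr
      linarith
    linarith
  have e3 : (l2 w ^ 2) ^ 2 ≤ 4 * (G * l2 w1 ^ 2) := by
    have c := cs_int h2 (f := fun y => |y| * ‖w y‖) (g := fun y => ‖w1 y‖) (by fun_prop)
      (by fun_prop)
    rw [← l2_sq] at c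
    have : ∫ y in (-1:ℝ)..1, (|y| * ‖w y‖) ^ 2 = G := by
      simp only [mul_pow, sq_abs, hG]
    rw [this] at c
    have : (l2 w ^ 2) ^ 2 ≤ (2 * ∫ y in (-1:ℝ)..1, (|y| * ‖w y‖) * ‖w1 y‖) ^ 2 := by gcongr
    linarith
  have e4 : σ ^ 4 * l2 w1 ^ 2 ≤ l2 f * l2 w := by
    have := H.energy_re
    have : 0 ≤ σ ^ 4 * (K ^ 2 * l2 w ^ 2) := by positivity
    linarith
  set x := σ ^ 2 * l2 w with hx
  have x0 : 0 ≤ x := by positivity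
  have e5 : x ^ 4 ≤ 4 * Γ * l2 f * x ^ 3 + 4 * l2 f ^ 2 * x ^ 2 := by
    calc x ^ 4 = σ ^ 8 * (l2 w ^ 2) ^ 2 := by rw [hx]; ring
      _ ≤ σ ^ 8 * (4 * (G * l2 w1 ^ 2)) := by gcongr
      _ = 4 * σ ^ 4 * (G * (σ ^ 4 * l2 w1 ^ 2)) := by ring
      _ ≤ 4 * σ ^ 4 * ((Γ * σ ^ 2 * l2 w ^ 2 + l2 f * l2 w) * (l2 f * l2 w)) := by gcongr
      _ = _ := by rw [hx]; ring
  have hxF : x ≤ (4 * Γ + 2) * l2 f := by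
    by_contra hc
    push Not at hc
    have xp : 0 < x := lt_of_le_of_lt (by positivity) hc
    have : x ^ 2 * x ^ 2 ≤ x ^ 2 * (4 * Γ * l2 f * x + 4 * l2 f ^ 2) := by linarith
    have := le_of_mul_le_mul_left this (by positivity)
    have h3 : 2 * l2 f < x := lt_of_le_of_lt (by nlinarith) hc
    nlinarith
  refine ⟨hxF, ?_⟩
  have J : ∫ y in (-1:ℝ)..1, (y ^ 2 + σ ^ 2)⁻¹ ≤ 4 / σ := by
    rw [ftc h2 (G := fun y => arctan (y / σ) / σ)]
    · rw [← sub_div]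
      gcongr
      have := arctan_lt_pi_div_two (1 / σ)
      have := neg_pi_div_two_lt_arctan (-1 / σ)
      linarith [pi_le_four]
    · exact ContinuousOn.inv₀ (by fun_prop) (fun y _ => by positivity)
    · intro y _
      refine (((hasDerivAt_id y).div_const σ).arctan.div_const σ).congr_deriv ?_
      have : σ ^ 2 + y ^ 2 ≠ 0 := by positivity
      simp
      field_simp
      ring
  have e6 := cs_weight h2 (ρ := fun y => y ^ 2 + σ ^ 2) (g := fun y => ‖w y‖) (by fun_prop)
    (by fun_prop) (fun y _ => by positivity)
  have e7 : ∫ y in (-1:ℝ)..1, (y ^ 2 + σ ^ 2) * ‖w y‖ ^ 2 = G + σ ^ 2 * l2 w ^ 2 := by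
    rw [l2_sq, ← intervalIntegral.integral_const_mul, hG, ← intervalIntegral.integral_add
      (ii_of h2 (by fun_prop)) (ii_of h2 (by fun_prop))]
    congr 1; ext y; ring
  rw [e7] at e6
  have e8 : l1 w ^ 2 ≤ 4 / σ * (G + σ ^ 2 * l2 w ^ 2) := by
    refine le_trans e6 ?_
    gcongr
  calc σ ^ 3 * l1 w ^ 2 ≤ σ ^ 3 * (4 / σ * (G + σ ^ 2 * l2 w ^ 2)) := by gcongr
    _ ≤ σ ^ 3 * (4 / σ * ((Γ * σ ^ 2 * l2 w ^ 2 + l2 f * l2 w) + σ ^ 2 * l2 w ^ 2)) := by gcongr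
    _ = 4 * (Γ + 1) * x ^ 2 + 4 * l2 f * x := by rw [hx]; field_simp; ring
    _ ≤ 4 * (Γ + 1) * ((4 * Γ + 2) * l2 f) ^ 2 + 4 * l2 f * ((4 * Γ + 2) * l2 f) := by gcongr
    _ = _ := by ring

lemma caseC (hσ : 0 < σ) (hσ1 : σ < 1)
    (H : NOS (σ ^ 4) K a s w w1 w2 φ φ1 φ2 f) (ha : 1 < a) :
    σ ^ 2 * l2 w ≤ 592 * l2 f ∧ 
      σ ^ 3 * l1 w ^ 2 ≤ 2 * 592 ^ 2 * l2 f ^ 2 := by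
  have := H.cw; have := H.cw1; have := H.cp; have := H.cf; have := H.cw2
  have h2 : (-1:ℝ) ≤ 1 := by norm_num
  have W0 := l2_nonneg w
  have W10 := l2_nonneg w1
  have F0 := l2_nonneg f
  set A := ∫ y in (-1:ℝ)..1, (a - y ^ 2) * ‖w y‖ ^ 2 with hA
  have hAle : A ≤ 288 * (l2 f * l2 w) := by
    have q := coerc1 one_pos (by simpa using ha) (lt_of_lt_of_le one_pos H.hK)
      (by linarith [H.hK]) H.hp H.hp1 H.cp2 H.cw H.ell H.pa H.pb
    have h := H.energy le_rfl h2 le_rfl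
    rw [dirichlet_energy h2 H.hp H.hp1 H.cp2 H.ell H.pa H.pb, H.wa, H.wb] at h
    simp only [norm_zero, mul_zero, add_zero] at h
    have := (abs_le.1 h).2
    linarith
  obtain ⟨τ, hτ, rfl⟩ : ∃ τ : ℝ, 0 < τ ∧ σ = τ ^ 2 := ⟨√σ, by positivity, by rw [sq_sqrt hσ.le]⟩
  have hτ1 : τ < 1 := by nlinarith
  set h := τ ^ 3 with hh
  have h0 : 0 < h := by positivity
  have h1 : h < 1 := pow_lt_one₀ hτ.le hτ1 (by norm_num)
  have hP := l2_prod H.cw H.cw1 le_rfl h2 le_rfl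
  have wR : ∀ y ∈ Set.Icc (1 - h) 1, ‖w y‖ ^ 2 ≤ 2 * (l2 w * l2 w1) := by
    intro y hy
    have := sq_norm_diff H.hw H.cw1 (γ := -1) (δ := 1) (y := y) (z := 1)
      ⟨by linarith [hy.1], hy.2⟩ ⟨by norm_num, le_rfl⟩
    rw [H.wb] at this; simp at this; linarith
  have wL : ∀ y ∈ Set.Icc (-1) (-1 + h), ‖w y‖ ^ 2 ≤ 2 * (l2 w * l2 w1) := by
    intro y hy
    have := sq_norm_diff H.hw H.cw1 (γ := -1) (δ := 1) (y := y) (z := -1)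
      ⟨hy.1, by linarith [hy.2]⟩ ⟨le_rfl, by norm_num⟩
    rw [H.wa] at this; simp at this; linarith
  have iR : ∫ y in (1 - h)..1, ‖w y‖ ^ 2 ≤ 2 * (l2 w * l2 w1) * h := by
    have := int_mono (by linarith : 1 - h ≤ 1) (f := fun y => ‖w y‖ ^ 2) 
      (g := fun _ => 2 * (l2 w * l2 w1)) (by fun_prop) (by fun_prop) wR
    simp at this; linarith
  have iL : ∫ y in (-1)..(-1 + h), ‖w y‖ ^ 2 ≤ 2 * (l2 w * l2 w1) * h := by
    have := int_mono (by linarith : -1 ≤ -1 + h) (f := fun y => ‖w y‖ ^ 2) 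
      (g := fun _ => 2 * (l2 w * l2 w1)) (by fun_prop) (by fun_prop) wL
    simp at this; linarith
  have iM : h * ∫ y in (-1 + h)..(1 - h), ‖w y‖ ^ 2 ≤ A := by
    by_cases hle : -1 + h ≤ 1 - h
    · rw [← intervalIntegral.integral_const_mul]
      refine le_trans (int_mono hle (g := fun y => (a - y ^ 2) * ‖w y‖ ^ 2) (by fun_prop)
        (by fun_prop) ?_) (int_sub_le (by linarith) hle (by linarith) (by fun_prop) ?_)
      · intro y hy
        have : h ≤ a - y ^ 2 := by nlinarith [hy.1, hy.2]
        gcongr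
      · intro y hy
        have : 0 ≤ a - y ^ 2 := by nlinarith [hy.1, hy.2]
        positivity
    · linarith
  have sp : l2 w ^ 2 = (∫ y in (-1)..(-1 + h), ‖w y‖ ^ 2) + 
      ((∫ y in (-1 + h)..(1 - h), ‖w y‖ ^ 2) + ∫ y in (1 - h)..1, ‖w y‖ ^ 2) := by
    rw [l2_sq, int_split (β := -1 + h) (by linarith) (by linarith) (by fun_prop),
      int_split (α := -1 + h) (β := 1 - h) (by linarith) (by linarith) (by fun_prop)]
  have e4 : (τ ^ 2) ^ 4 * l2 w1 ^ 2 ≤ l2 f * l2 w := by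
    have := H.energy_re
    have : 0 ≤ (τ ^ 2) ^ 4 * (K ^ 2 * l2 w ^ 2) := by positivity
    linarith
  set x := h * l2 w with hx
  set x1 := τ ^ 6 * l2 w1 with hx1
  have x0 : 0 ≤ x := by positivity
  have x10 : 0 ≤ x1 := by positivity
  have q1 : x ^ 2 ≤ x * (288 * l2 f + 4 * x1) := by
    have : h * l2 w ^ 2 ≤ 288 * (l2 f * l2 w) + 4 * h ^ 2 * (l2 w * l2 w1) := by
      have := mul_le_mul_of_nonneg_left iL h0.le
      have := mul_le_mul_of_nonneg_left iR h0.le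
      rw [sp]; linarith
    calc x ^ 2 = h * (h * l2 w ^ 2) := by rw [hx]; ring
      _ ≤ h * (288 * (l2 f * l2 w) + 4 * h ^ 2 * (l2 w * l2 w1)) := by gcongr
      _ = _ := by rw [hx, hx1, hh]; ring
  have q2 : x1 ^ 2 ≤ l2 f * x := by
    calc x1 ^ 2 = τ ^ 4 * ((τ ^ 2) ^ 4 * l2 w1 ^ 2) := by rw [hx1]; ring
      _ ≤ τ ^ 4 * (l2 f * l2 w) := by gcongr
      _ = τ * (l2 f * x) := by rw [hx, hh]; ring
      _ ≤ 1 * (l2 f * x) := by gcongr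
      _ = _ := by ring
  have hxF : x ≤ 592 * l2 f := by
    by_contra hc
    push Not at hc
    have xp : 0 < x := lt_of_le_of_lt (by positivity) hc
    have : x ≤ 288 * l2 f + 4 * x1 := by
      apply le_of_mul_le_mul_left _ xp
      linarith
    nlinarith [sq_nonneg (x1 - x / 8)]
  have n1 : l1 w ^ 2 ≤ 2 * l2 w ^ 2 := by
    have := cs_one h2 (g := fun y => ‖w y‖) (by fun_prop)
    rw [← l2_sq] at this
    unfold l1
    norm_num at this ⊢
    linarith
  constructor
  · calc (τ ^ 2) ^ 2 * l2 w = τ * x := by rw [hx, hh]; ring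
      _ ≤ 1 * x := by gcongr
      _ ≤ _ := by linarith
  · calc (τ ^ 2) ^ 3 * l1 w ^ 2 ≤ (τ ^ 2) ^ 3 * (2 * l2 w ^ 2) := by gcongr
      _ = 2 * x ^ 2 := by rw [hx, hh]; ring
      _ ≤ 2 * (592 * l2 f) ^ 2 := by gcongr
      _ = _ := by ring
end

section
variable {ε K a b h s σ : ℝ} {w w1 w2 φ φ1 φ2 f : ℝ → ℂ}

lemma norm_int_sq {g : ℝ → ℂ} (hg : Continuous g) {α β : ℝ} (h1 : -1 ≤ α)
    (h2 : α ≤ β) (h3 : β ≤ 1) : (∫ y in α..β, ‖g y‖) ^ 2 ≤ (β - α) * l2 g ^ 2 := by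
  refine (cs_one h2 (by fun_prop)).trans ?_
  gcongr
  exact l2_sub hg h1 h2 h3

lemma sixsq (p q r t u v : ℝ) : (p+q+r+t+u+v)^2 ≤ 6*(p^2+q^2+r^2+t^2+u^2+v^2) := by
  linarith [sq_nonneg (p-q), sq_nonneg (p-r), sq_nonneg (p-t), sq_nonneg (p-u),
    sq_nonneg (p-v), sq_nonneg (q-r), sq_nonneg (q-t), sq_nonneg (q-u), sq_nonneg (q-v),
    sq_nonneg (r-t), sq_nonneg (r-u), sq_nonneg (r-v), sq_nonneg (t-u), sq_nonneg (t-v),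
    sq_nonneg (u-v)]

set_option maxHeartbeats 2000000 in
lemma NOS.mbound (H : NOS ε K a s w w1 w2 φ φ1 φ2 f) (hb1 : b ≤ 1) (ha : a = b ^ 2) (h0 : 0 < h)
    (hhb : h ≤ b) {y : ℝ} (hy : y ∈ Set.Icc (b - h) b) :
    h ^ 3 * ‖φ y‖ ^ 2 ≤ 300 * (h ^ 2 * l2 f ^ 2 + ε ^ 2 * l2 w1 ^ 2 + b ^ 2 * h ^ 4 * l2 w ^ 2 +
      h ^ 4 * ((∫ y in (-1:ℝ)..1, (a - y ^ 2) * ‖w y‖ ^ 2) + l2 f * l2 w)) := by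
  have cw := H.cw; have cw1 := H.cw1; have cp := H.cp; have cf := H.cf; have cw2 := H.cw2
  have cp1 := H.cp1
  have hε := H.hε
  have b0 : 0 < b := by linarith
  obtain ⟨c1, m1, g1⟩ := exists_le_avg (α := b - h) (β := b - 2 * h / 3) (by linarith)
    (g := fun y => ‖w1 y‖ ^ 2) (by fun_prop)
  obtain ⟨c2, m2, g2⟩ := exists_le_avg (α := b - h / 3) (β := b) (by linarith)
    (g := fun y => ‖w1 y‖ ^ 2) (by fun_prop)
  have q1 : h * ‖w1 c1‖ ^ 2 ≤ 3 * l2 w1 ^ 2 := by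
    have := g1.trans (l2_sub cw1 (by linarith) (by linarith) (by linarith))
    linarith
  have q2 : h * ‖w1 c2‖ ^ 2 ≤ 3 * l2 w1 ^ 2 := by
    have := g2.trans (l2_sub cw1 (by linarith) (by linarith) (by linarith))
    linarith
  have c12 : c1 ≤ c2 := by linarith [m1.2, m2.1]
  have k1 : -1 ≤ c1 := by linarith [m1.1]
  have k2 : c2 ≤ 1 := by linarith [m2.2]
  have D1 : h / 3 ≤ c2 - c1 := by linarith [m1.2, m2.1]
  have D2 : c2 - c1 ≤ h := by linarith [m1.1, m2.2]
  have IC : ∀ {g : ℝ → ℂ}, Continuous g → IntervalIntegrable g volume c1 c2 :=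
    fun hg => hg.intervalIntegrable _ _
  have E : ∫ y in c1..c2, f y = -(ε:ℂ) * ((w1 c2 - w1 c1) - (K:ℂ) ^ 2 * ∫ y in c1..c2, w y) +
      Complex.I * s * ((∫ y in c1..c2, ((a:ℂ) - (y:ℂ) ^ 2) * w y) + 2 * ∫ y in c1..c2, φ y) := by
    have e1 : ∫ t in c1..c2, w2 t = w1 c2 - w1 c1 := 
      intervalIntegral.integral_eq_sub_of_hasDerivAt (fun t _ => H.hw1 t) (IC cw2)
    rw [← e1]
    simp only [← intervalIntegral.integral_const_mul]
    rw [← intervalIntegral.integral_sub (IC (by fun_prop)) (IC (by fun_prop)),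
      ← intervalIntegral.integral_add (IC (by fun_prop)) (IC (by fun_prop))]
    simp only [← intervalIntegral.integral_const_mul]
    rw [← intervalIntegral.integral_add (IC (by fun_prop)) (IC (by fun_prop))]
    apply intervalIntegral.integral_congr
    intro t ht
    rw [Set.uIcc_of_le c12] at ht
    simp only
    rw [← H.eq t ⟨by linarith [ht.1], by linarith [ht.2]⟩]
  set X := ∫ y in c1..c2, φ y with hX
  have n1 : ‖∫ y in c1..c2, f y‖ ≤ ∫ y in c1..c2, ‖f y‖ :=
    intervalIntegral.norm_integral_le_integral_norm c12
  have n2 : ‖∫ y in c1..c2, w y‖ ≤ ∫ y in c1..c2, ‖w y‖ :=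
    intervalIntegral.norm_integral_le_integral_norm c12
  have n3 : ‖∫ y in c1..c2, ((a:ℂ) - (y:ℂ) ^ 2) * w y‖ ≤ 2 * b * h * ∫ y in c1..c2, ‖w y‖ := by
    refine (intervalIntegral.norm_integral_le_integral_norm c12).trans ?_
    rw [← intervalIntegral.integral_const_mul]
    apply int_mono c12 (by fun_prop) (by fun_prop)
    intro t ht
    rw [norm_mul]
    gcongr
    rw [show (a:ℂ) - (t:ℂ) ^ 2 = ((a - t ^ 2 : ℝ) : ℂ) by push_cast; ring, Complex.norm_real,
      Real.norm_eq_abs, abs_le, ha]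
    have t1 : b - h ≤ t := by linarith [ht.1, m1.1]
    have t2 : t ≤ b := by linarith [ht.2, m2.2]
    constructor
    · nlinarith
    · nlinarith
  set nf := ∫ y in c1..c2, ‖f y‖
  set nw := ∫ y in c1..c2, ‖w y‖
  have nf0 : 0 ≤ nf := intervalIntegral.integral_nonneg c12 (fun y _ => norm_nonneg _)
  have nw0 : 0 ≤ nw := intervalIntegral.integral_nonneg c12 (fun y _ => norm_nonneg _)
  have nf2 : nf ^ 2 ≤ h * l2 f ^ 2 :=
    (norm_int_sq cf k1 c12 k2).trans (by gcongr)
  have nw2 : nw ^ 2 ≤ h * l2 w ^ 2 :=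
    (norm_int_sq cw k1 c12 k2).trans (by gcongr)
  have sabs : |s| = 1 := by
    have := H.hs
    rw [← sq_abs] at this; nlinarith [abs_nonneg s]
  have n4 : 2 * ‖X‖ ≤ nf + ε * (‖w1 c1‖ + ‖w1 c2‖) + ε * K ^ 2 * nw + 2 * b * h * nw := by
    have e : Complex.I * s * (2 * X) = (∫ y in c1..c2, f y) + (ε:ℂ) * (w1 c2 - w1 c1)
        - (ε:ℂ) * (K:ℂ) ^ 2 * (∫ y in c1..c2, w y) 
        - Complex.I * s * ∫ y in c1..c2, ((a:ℂ) - (y:ℂ) ^ 2) * w y := by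
      rw [E]; ring
    have e' := congrArg norm e
    have is1 : ‖Complex.I * (s:ℂ)‖ = 1 := by simp [sabs]
    rw [norm_mul, is1, norm_mul, one_mul] at e'
    have t0 : ‖(2:ℂ)‖ = 2 := by simp
    rw [t0] at e'
    rw [e']
    refine (norm_sub_le _ _).trans ?_
    rw [norm_mul (Complex.I * (s:ℂ)), is1, one_mul]
    refine add_le_add ((norm_sub_le _ _).trans (add_le_add ((norm_add_le _ _).trans 
      (add_le_add n1 ?_)) ?_)) n3
    · rw [norm_mul, Complex.norm_of_nonneg hε.le]
      gcongr
      exact (norm_sub_le _ _).trans (by linarith)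
    · rw [norm_mul, norm_mul, norm_pow, Complex.norm_of_nonneg hε.le, Complex.norm_real,
        Real.norm_eq_abs, sq_abs]
      gcongr
  have n5 : (ε * K ^ 2 * nw) ^ 2 ≤ h * l2 f ^ 2 := by
    have W0 := l2_nonneg w
    have F0 := l2_nonneg f
    have e := H.energy_re
    have e1 : ε * K ^ 2 * l2 w ≤ l2 f := by
      rcases W0.eq_or_lt with h | h
      · rw [← h]; simpa
      · apply le_of_mul_le_mul_right _ h
        have : 0 ≤ ε * l2 w1 ^ 2 := by positivity
        linarith
    calc (ε * K ^ 2 * nw) ^ 2 = (ε * K ^ 2) ^ 2 * nw ^ 2 := by ring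
      _ ≤ (ε * K ^ 2) ^ 2 * (h * l2 w ^ 2) := by gcongr
      _ = h * (ε * K ^ 2 * l2 w) ^ 2 := by ring
      _ ≤ _ := by gcongr
  have hU := H.U_le
  set U := ∫ y in (-1:ℝ)..1, (‖φ1 y‖ ^ 2 + K ^ 2 * ‖φ y‖ ^ 2)
  have hU1 : ∀ t ∈ Set.Icc c1 c2, ‖φ y - φ t‖ ^ 2 ≤ h * U := by
    intro t ht
    have e := norm_diff H.hp cp1 hy (z := t) ⟨by linarith [ht.1, m1.1], by linarith [ht.2, m2.2]⟩
    refine e.trans ?_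
    have e2 : ∫ y in (b - h)..b, ‖φ1 y‖ ^ 2 ≤ U := by
      refine (int_sub_le (γ := -1) (δ := 1) (by linarith) (by linarith) hb1 (by fun_prop)
        (fun y _ => by positivity)).trans ?_
      exact int_mono (by norm_num) (by fun_prop) (by fun_prop) 
        (fun y _ => le_add_of_nonneg_right (by positivity))
    have e3 : b - (b - h) = h := by ring
    rw [e3]; gcongr
  have U0 : 0 ≤ U := intervalIntegral.integral_nonneg (by norm_num) (fun y _ => by positivity)
  have n6 : h / 3 * ‖φ y‖ ≤ ‖X‖ + h * √(h * U) := by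
    have e : ((c2 - c1 : ℝ):ℂ) * φ y = X + ∫ t in c1..c2, (φ y - φ t) := by
      rw [intervalIntegral.integral_sub (by simp) (IC cp), intervalIntegral.integral_const, hX]
      simp only [Complex.real_smul]; ring
    have e' := congrArg norm e
    rw [norm_mul, Complex.norm_of_nonneg (by linarith)] at e'
    calc h / 3 * ‖φ y‖ ≤ (c2 - c1) * ‖φ y‖ := by gcongr
      _ ≤ ‖X‖ + ‖∫ t in c1..c2, (φ y - φ t)‖ := by rw [e']; exact norm_add_le _ _
      _ ≤ ‖X‖ + √(h * U) * |c2 - c1| := by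
        gcongr
        apply intervalIntegral.norm_integral_le_of_norm_le_const
        intro t ht
        rw [Set.uIoc_of_le c12] at ht
        exact Real.le_sqrt_of_sq_le (hU1 t ⟨ht.1.le, ht.2⟩)
      _ ≤ _ := by
        rw [abs_of_nonneg (by linarith)]
        linarith [mul_le_mul_of_nonneg_right D2 (Real.sqrt_nonneg (h * U))]
  have sq1 : (√(h * U)) ^ 2 = h * U := Real.sq_sqrt (by positivity)
  set T := √(h * U)
  have fin : (2 * h / 3 * ‖φ y‖) ^ 2 ≤ 6 * (nf ^ 2 + (ε * ‖w1 c1‖) ^ 2 + (ε * ‖w1 c2‖) ^ 2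
      + (ε * K ^ 2 * nw) ^ 2 + (2 * b * h * nw) ^ 2 + (2 * h * T) ^ 2) := by
    have : 2 * h / 3 * ‖φ y‖ ≤ nf + ε * ‖w1 c1‖ + ε * ‖w1 c2‖ + ε * K ^ 2 * nw + 2 * b * h * nw +
      2 * h * T := by linarith
    exact (pow_le_pow_left₀ (by positivity) this 2).trans (sixsq _ _ _ _ _ _)
  have a1 : h * (ε * ‖w1 c1‖) ^ 2 ≤ 3 * (ε ^ 2 * l2 w1 ^ 2) := by
    calc _ = ε ^ 2 * (h * ‖w1 c1‖ ^ 2) := by ring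
      _ ≤ ε ^ 2 * (3 * l2 w1 ^ 2) := by gcongr
      _ = _ := by ring
  have a2 : h * (ε * ‖w1 c2‖) ^ 2 ≤ 3 * (ε ^ 2 * l2 w1 ^ 2) := by
    calc _ = ε ^ 2 * (h * ‖w1 c2‖ ^ 2) := by ring
      _ ≤ ε ^ 2 * (3 * l2 w1 ^ 2) := by gcongr
      _ = _ := by ring
  have a3 : h * nf ^ 2 ≤ h ^ 2 * l2 f ^ 2 := by
    calc _ ≤ h * (h * l2 f ^ 2) := by gcongr
      _ = _ := by ring
  have a4 : h * (ε * K ^ 2 * nw) ^ 2 ≤ h ^ 2 * l2 f ^ 2 := by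
    calc _ ≤ h * (h * l2 f ^ 2) := by gcongr
      _ = _ := by ring
  have a5 : h * (2 * b * h * nw) ^ 2 ≤ 4 * (b ^ 2 * h ^ 4 * l2 w ^ 2) := by
    calc _ = 4 * b ^ 2 * h ^ 3 * nw ^ 2 := by ring
      _ ≤ 4 * b ^ 2 * h ^ 3 * (h * l2 w ^ 2) := by gcongr
      _ = _ := by ring
  have a6 : h * (2 * h * T) ^ 2 ≤ 2 * (h ^ 4 * 
      ((∫ y in (-1:ℝ)..1, (a - y ^ 2) * ‖w y‖ ^ 2) + l2 f * l2 w)) := by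
    calc _ = 2 * (h ^ 4 * (2 * U)) := by rw [mul_pow, sq1]; ring
      _ ≤ _ := by gcongr
  have a7 : h ^ 3 * ‖φ y‖ ^ 2 = 9 / 4 * (h * (2 * h / 3 * ‖φ y‖) ^ 2) := by ring
  have a8 := mul_le_mul_of_nonneg_left fin h0.le
  have p1 : 0 ≤ h ^ 2 * l2 f ^ 2 := by positivity
  have p2 : 0 ≤ ε ^ 2 * l2 w1 ^ 2 := by positivity
  have p3 : 0 ≤ b ^ 2 * h ^ 4 * l2 w ^ 2 := by positivity
  have p4 : 0 ≤ h ^ 4 * ((∫ y in (-1:ℝ)..1, (a - y ^ 2) * ‖w y‖ ^ 2) + l2 f * l2 w) := by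
    have : 0 ≤ (∫ y in (-1:ℝ)..1, (a - y ^ 2) * ‖w y‖ ^ 2) + l2 f * l2 w := by linarith
    positivity
  rw [a7]
  linarith

lemma choose_c (H : NOS ε K a s w w1 w2 φ φ1 φ2 f) (hb1 : b ≤ 1) (h0 : 0 < h)
    (hhb : h ≤ b) : ∃ c ∈ Set.Icc (b - h) (b - h / 2), 
      h * (‖w1 c‖ * ‖w c‖ + ‖w1 (-c)‖ * ‖w (-c)‖) ≤ 4 * (l2 w * l2 w1) := by
  have cw := H.cw; have cw1 := H.cw1
  obtain ⟨c, hc, g⟩ := exists_le_avg (α := b - h) (β := b - h / 2) (by linarith)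
    (g := fun y => ‖w1 y‖ * ‖w y‖ + ‖w1 (-y)‖ * ‖w (-y)‖) (by fun_prop)
  refine ⟨c, hc, ?_⟩
  have le : b - h ≤ b - h / 2 := by linarith
  rw [intervalIntegral.integral_add (ii_of le (by fun_prop)) (ii_of le (by fun_prop))] at g
  have i1 := l2_prod cw1 cw (by linarith : -1 ≤ b - h) le (by linarith)
  have i2 := l2_prod (f := fun y => w1 (-y)) (g := fun y => w (-y)) (by fun_prop) (by fun_prop)
    (by linarith : -1 ≤ b - h) le (by linarith)
  rw [l2_flip, l2_flip] at i2
  linarith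

lemma B2_half (H : NOS ε K a s w w1 w2 φ φ1 φ2 f) (hb1 : b ≤ 1) (ha : a = b ^ 2) (hσ : 0 < σ)
    (hσb : 2 * σ ≤ b) :
    σ * b * ∫ y in (0:ℝ)..1, ‖w y‖ ^ 2 ≤ 3 * (∫ y in (0:ℝ)..1, |a - y ^ 2| * ‖w y‖ ^ 2) +
      4 * (σ ^ 2 * b) * (l2 w * l2 w1) := by
  have cw := H.cw; have cw1 := H.cw1
  have b0 : 0 < b := by linarith
  have hP := l2_prod H.cw H.cw1 le_rfl (by norm_num) le_rfl
  set E := ∫ y in (0:ℝ)..1, |a - y ^ 2| * ‖w y‖ ^ 2 with hE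
  have sub : ∀ α β : ℝ, 0 ≤ α → α ≤ β → β ≤ 1 → (∀ y ∈ Set.Icc α β, σ * b ≤ |a - y ^ 2|) →
      σ * b * ∫ y in α..β, ‖w y‖ ^ 2 ≤ ∫ y in α..β, |a - y ^ 2| * ‖w y‖ ^ 2 := by
    intro α β h1 h2 h3 h4
    rw [← intervalIntegral.integral_const_mul]
    apply int_mono h2 (by fun_prop) (by fun_prop)
    intro y hy
    have := h4 y hy
    gcongr
  have subE : ∀ α β : ℝ, 0 ≤ α → α ≤ β → β ≤ 1 →
      ∫ y in α..β, |a - y ^ 2| * ‖w y‖ ^ 2 ≤ E := fun α β h1 h2 h3 =>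
    int_sub_le h1 h2 h3 (by fun_prop) (fun y _ => by positivity)
  have s0 : ∀ y, 0 ≤ y → y ≤ b - σ → σ * b ≤ |a - y ^ 2| := by
    intro y h1 h2
    refine le_trans ?_ (le_abs_self _)
    rw [ha]; nlinarith
  have s2 : ∀ y, b + σ ≤ y → σ * b ≤ |a - y ^ 2| := by
    intro y h1
    refine le_trans ?_ (neg_le_abs _)
    rw [ha]; nlinarith
  obtain ⟨z, hz, gz⟩ := exists_le_avg (α := b - 2 * σ) (β := b - σ) (by linarith)
    (g := fun y => ‖w y‖ ^ 2) (by fun_prop)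
  have hz2 : σ ^ 2 * b * ‖w z‖ ^ 2 ≤ E := by
    have t1 := sub (b - 2 * σ) (b - σ) (by linarith) (by linarith) (by linarith)
      (fun y hy => s0 y (by linarith [hy.1]) hy.2)
    have t2 := subE (b - 2 * σ) (b - σ) (by linarith) (by linarith) (by linarith)
    calc σ ^ 2 * b * ‖w z‖ ^ 2 = σ * b * (‖w z‖ ^ 2 * (b - σ - (b - 2 * σ))) := by ring
      _ ≤ σ * b * ∫ y in (b - 2 * σ)..(b - σ), ‖w y‖ ^ 2 := by gcongr
      _ ≤ E := t1.trans t2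
  have wy : ∀ y ∈ Set.Icc (-1:ℝ) 1, ‖w y‖ ^ 2 ≤ ‖w z‖ ^ 2 + 2 * (l2 w * l2 w1) := by
    intro y hy
    have := sq_norm_diff H.hw H.cw1 (γ := -1) (δ := 1) (y := y) (z := z) hy
      ⟨by linarith [hz.1], by linarith [hz.2]⟩
    linarith
  have win : ∀ β, b - σ ≤ β → β ≤ b + σ → β ≤ 1 → σ * b * ∫ y in (b - σ)..β, ‖w y‖ ^ 2 ≤ 
      2 * E + 4 * (σ ^ 2 * b) * (l2 w * l2 w1) := by
    intro β h1 h2 h3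
    have i := int_mono h1 (f := fun y => ‖w y‖ ^ 2)
      (g := fun _ => ‖w z‖ ^ 2 + 2 * (l2 w * l2 w1)) (by fun_prop) (by fun_prop)
      (fun y hy => wy y ⟨by linarith [hy.1], by linarith [hy.2]⟩)
    rw [intervalIntegral.integral_const, smul_eq_mul] at i
    have P0 : 0 ≤ l2 w * l2 w1 := mul_nonneg (l2_nonneg _) (l2_nonneg _)
    calc σ * b * ∫ y in (b - σ)..β, ‖w y‖ ^ 2 
        ≤ σ * b * ((β - (b - σ)) * (‖w z‖ ^ 2 + 2 * (l2 w * l2 w1))) := by gcongr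
      _ ≤ σ * b * ((2 * σ) * (‖w z‖ ^ 2 + 2 * (l2 w * l2 w1))) := by gcongr; linarith
      _ = 2 * (σ ^ 2 * b * ‖w z‖ ^ 2) + 4 * (σ ^ 2 * b) * (l2 w * l2 w1) := by ring
      _ ≤ _ := by gcongr
  have p1 := sub 0 (b - σ) le_rfl (by linarith) (by linarith) (fun y hy => s0 y hy.1 hy.2)
  by_cases hc : b + σ ≤ 1
  · have p3 := sub (b + σ) 1 (by linarith) hc le_rfl (fun y hy => s2 y hy.1)
    have p2 := win (b + σ) (by linarith) le_rfl hc
    have e : E = (∫ y in (0:ℝ)..(b - σ), |a - y ^ 2| * ‖w y‖ ^ 2) + 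
      ((∫ y in (b - σ)..(b + σ), |a - y ^ 2| * ‖w y‖ ^ 2)
       + ∫ y in (b + σ)..1, |a - y ^ 2| * ‖w y‖ ^ 2) := by
      rw [hE, int_split (β := b - σ) (by linarith) (by linarith) (by fun_prop),
        int_split (α := b - σ) (β := b + σ) (by linarith) (by linarith) (by fun_prop)]
    have e0 : 0 ≤ ∫ y in (b - σ)..(b + σ), |a - y ^ 2| * ‖w y‖ ^ 2 :=
      intervalIntegral.integral_nonneg (by linarith) (fun y _ => by positivity)
    rw [int_split (g := fun y => ‖w y‖ ^ 2) (β := b - σ) (by linarith) (by linarith) (by fun_prop),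
        int_split (g := fun y => ‖w y‖ ^ 2) (α := b - σ) (β := b + σ) (by linarith) (by linarith)
          (by fun_prop), mul_add, mul_add]
    linarith
  · have p2 := win 1 (by linarith) (by linarith) le_rfl
    have := subE 0 (b - σ) le_rfl (by linarith) (by linarith)
    rw [int_split (g := fun y => ‖w y‖ ^ 2) (β := b - σ) (by linarith) (by linarith) (by fun_prop),
      mul_add]
    linarith

lemma B2 (H : NOS ε K a s w w1 w2 φ φ1 φ2 f) (hb1 : b ≤ 1) (ha : a = b ^ 2) (hσ : 0 < σ)
    (hσb : 2 * σ ≤ b) :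
    σ * b * l2 w ^ 2 ≤ 3 * (∫ y in (-1:ℝ)..1, |a - y ^ 2| * ‖w y‖ ^ 2) +
      8 * (σ ^ 2 * b) * (l2 w * l2 w1) := by
  have cw := H.cw
  have r := B2_half H hb1 ha hσ hσb
  have l := B2_half H.flip hb1 ha hσ hσb
  rw [l2_flip, l2_flip'] at l
  have e1 : ∫ y in (0:ℝ)..1, ‖w (-y)‖ ^ 2 = ∫ y in (-1:ℝ)..0, ‖w y‖ ^ 2 := by
    rw [intervalIntegral.integral_comp_neg (fun y => ‖w y‖ ^ 2)]; simp
  have e2 : ∫ y in (0:ℝ)..1, |a - y ^ 2| * ‖w (-y)‖ ^ 2 = 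
      ∫ y in (-1:ℝ)..0, |a - y ^ 2| * ‖w y‖ ^ 2 := by
    have := intervalIntegral.integral_comp_neg (a := 0) (b := 1)
      (fun y => |a - y ^ 2| * ‖w y‖ ^ 2)
    simpa using this
  rw [e1, e2] at l
  rw [l2_sq, int_split (g := fun y => ‖w y‖ ^ 2) (β := 0) (by norm_num) (by norm_num) 
    (by fun_prop), int_split (g := fun y => |a - y ^ 2| * ‖w y‖ ^ 2) (β := 0) (by norm_num)
    (by norm_num) (by fun_prop), mul_add]
  linarith

end

lemma J_half {b h : ℝ} (h0 : 0 < h) (hhb : 2 * h ≤ b) (hb1 : b ≤ 1) :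
    ∫ y in (0:ℝ)..1, (|b ^ 2 - y ^ 2| + b * h)⁻¹ ≤ 
      (1 / b) * (log (b + h) - log h + 4 * (log b - log h)) := by
  have b0 : 0 < b := by linarith
  have bh : 0 < b - h := by linarith
  have cc : ∀ α β : ℝ, ContinuousOn (fun y : ℝ => (|b ^ 2 - y ^ 2| + b * h)⁻¹) (Set.Icc α β) :=
    fun α β => ContinuousOn.inv₀ (by fun_prop) (fun y _ => by positivity)
  rw [int_split (β := b) b0.le hb1 (cc _ _)]
  have i1 : ∫ y in (0:ℝ)..b, (|b ^ 2 - y ^ 2| + b * h)⁻¹ ≤ 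
      (1 / b) * (log (b + h) - log h) := by
    have e : ∫ y in (0:ℝ)..b, (b * (b - y + h))⁻¹ = (1 / b) * (log (b + h) - log h) := by
      rw [ftc b0.le (G := fun y => -(1 / b) * log (b - y + h))]
      · simp; ring
      · exact ContinuousOn.inv₀ (by fun_prop) (fun y hy => by
          have : 0 < b - y + h := by linarith [hy.2]
          positivity)
      · intro y hy
        have : 0 < b - y + h := by linarith [hy.2]
        refine ((((((hasDerivAt_id y).const_sub b).add_const h)).log this.ne').const_mul
          (-(1 / b))).congr_deriv ?_
        simp
        ring
    rw [← e]
    apply int_mono b0.le (cc _ _)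
    · exact ContinuousOn.inv₀ (by fun_prop) (fun y hy => by
          have : 0 < b - y + h := by linarith [hy.2]
          positivity)
    · intro y hy
      have : 0 < b - y + h := by linarith [hy.2]
      apply inv_anti₀ (by positivity)
      have := le_abs_self (b ^ 2 - y ^ 2)
      nlinarith [hy.1, hy.2]
  have i2 : ∫ y in b..1, (|b ^ 2 - y ^ 2| + b * h)⁻¹ ≤ (1 / b) * (4 * (log b - log h)) := by
    have pos : ∀ y ∈ Set.Icc b 1, 0 < (y - b + h) * y := fun y hy => by
      have : 0 < y - b + h := by linarith [hy.1]
      have : 0 < y := by linarith [hy.1]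
      positivity
    have e : ∫ y in b..1, 2 * ((y - b + h) * y)⁻¹ = 
        2 / (b - h) * (log (1 - b + h) - log h + log b) := by
      rw [ftc hb1 (G := fun y => 2 / (b - h) * (log (y - b + h) - log y))]
      · simp; ring
      · exact (ContinuousOn.inv₀ (by fun_prop) (fun y hy => (pos y hy).ne')).const_smul (2:ℝ)
      · intro y hy
        have t1 : 0 < y - b + h := by linarith [hy.1]
        have t2 : 0 < y := by linarith [hy.1]
        refine ((((((hasDerivAt_id y).sub_const b).add_const h)).log t1.ne').sub 
          (Real.hasDerivAt_log t2.ne')).const_mul (2 / (b - h)) |>.congr_deriv ?_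
        simp only [id]
        field_simp
        ring
    have l1 : log (1 - b + h) ≤ 0 := Real.log_nonpos (by linarith) (by linarith)
    have l2 : 0 ≤ log b - log h := by
      have := Real.log_le_log h0 (by linarith : h ≤ b); linarith
    calc _ ≤ ∫ y in b..1, 2 * ((y - b + h) * y)⁻¹ := by
          apply int_mono hb1 (cc _ _)
          · exact (ContinuousOn.inv₀ (by fun_prop) (fun y hy => (pos y hy).ne')).const_smul (2:ℝ)
          · intro y hy
            have := pos y hy
            have t2 : 0 < y := by linarith [hy.1]
            rw [show 2 * ((y - b + h) * y)⁻¹ = ((y - b + h) * y / 2)⁻¹ by field_simp]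
            apply inv_anti₀ (by positivity)
            have := neg_le_abs (b ^ 2 - y ^ 2)
            nlinarith [hy.1, hy.2]
      _ = _ := e
      _ ≤ 2 / (b - h) * (log b - log h) := by gcongr; linarith
      _ ≤ (4 / b) * (log b - log h) := by
          gcongr ?_ * _
          rw [div_le_div_iff₀ bh b0]; linarith
      _ = _ := by ring
  linarith

lemma J_bd {b r : ℝ} (hr : 2 ≤ r) (b0 : 0 < b) (hb1 : b ≤ 1) :
    ∫ y in (-1:ℝ)..1, (|b ^ 2 - y ^ 2| + b * (b / r ^ 3))⁻¹ ≤ 32 * log r / b := by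
  have r3 : 8 ≤ r ^ 3 := by nlinarith [sq_nonneg (r - 2), mul_self_nonneg r]
  have r0 : 0 < r := by linarith
  have hh : 2 * (b / r ^ 3) ≤ b := by
    rw [← mul_div_assoc, div_le_iff₀ (by positivity)]; nlinarith
  have h0 : 0 < b / r ^ 3 := by positivity
  have J := J_half h0 hh hb1
  have cc : ∀ α β : ℝ, ContinuousOn (fun y : ℝ => (|b ^ 2 - y ^ 2| + b * (b / r ^ 3))⁻¹)
    (Set.Icc α β) := fun α β => ContinuousOn.inv₀ (by fun_prop) (fun y _ => by positivity)
  have e : ∫ y in (-1:ℝ)..0, (|b ^ 2 - y ^ 2| + b * (b / r ^ 3))⁻¹ = 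
      ∫ y in (0:ℝ)..1, (|b ^ 2 - y ^ 2| + b * (b / r ^ 3))⁻¹ := by
    have := intervalIntegral.integral_comp_neg (a := 0) (b := 1)
      (fun y => (|b ^ 2 - y ^ 2| + b * (b / r ^ 3))⁻¹)
    simpa using this.symm
  rw [int_split (β := 0) (by norm_num) (by norm_num) (cc _ _), e]
  have g1 : log (b / r ^ 3) = log b - 3 * log r := by
    rw [Real.log_div b0.ne' (by positivity), Real.log_pow]; norm_num
  have g2 : log (b + b / r ^ 3) ≤ log b + log r := by
    rw [← Real.log_mul b0.ne' r0.ne']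
    apply Real.log_le_log (by positivity)
    nlinarith
  rw [g1] at J
  have : (1 / b) * (log (b + b / r ^ 3) - (log b - 3 * log r) + 4 * (log b - (log b - 3 * log r)))
      ≤ (1 / b) * (16 * log r) := by
    gcongr
    linarith
  calc _ ≤ 2 * ((1 / b) * (16 * log r)) := by linarith
    _ = _ := by ring

section
variable {ε K a b c h s σ : ℝ} {w w1 w2 φ φ1 φ2 f : ℝ → ℂ}

lemma phi1_bound (H : NOS ε K a s w w1 w2 φ φ1 φ2 f) (c0 : 0 < c) (hc : 2 * c ≤ 1)
    (hKc : K * c ≤ 1 / 4) {p p1 : ℝ → ℂ} {m : ℝ} (m0 : 0 ≤ m)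
    (hp : ∀ y, HasDerivAt p (p1 y) y) (cp1 : Continuous p1) (pc : p c = 0)
    (hm : ∀ y ∈ Set.Icc c 1, ‖φ y‖ ≤ m + ‖p y‖) :
    c * ‖φ1 c‖ ≤ 3 * m + 2 * √(c * ∫ y in c..1, (‖p1 y‖ ^ 2 + K ^ 2 * ‖p y‖ ^ 2)) + 
      c * ∫ y in c..1, ‖w y‖ := by
  have cw := H.cw; have cφ := H.cp; have cφ1 := H.cp1; have cφ2 := H.cp2
  have cp := cont_of_hd hp
  have K0 := H.hK
  set U := ∫ y in c..1, (‖p1 y‖ ^ 2 + K ^ 2 * ‖p y‖ ^ 2) with hU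
  have hM : ∀ y ∈ Set.Icc c (2 * c), ‖φ y‖ ≤ m + √(c * U) := by
    intro y hy
    have e := norm_diff hp cp1 hy (z := c) ⟨le_rfl, by linarith⟩
    rw [pc, sub_zero] at e
    have e2 : ∫ y in c..(2 * c), ‖p1 y‖ ^ 2 ≤ U := by
      refine (int_sub_le (γ := c) (δ := 1) le_rfl (by linarith) hc (by fun_prop)
        (fun y _ => by positivity)).trans ?_
      exact int_mono (by linarith) (by fun_prop) (by fun_prop) 
        (fun y _ => le_add_of_nonneg_right (by positivity))
    have e3 : ‖p y‖ ≤ √(c * U) := by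
      apply Real.le_sqrt_of_sq_le
      refine e.trans ?_
      rw [show 2 * c - c = c by ring]
      gcongr
    exact (hm y ⟨hy.1, by linarith [hy.2]⟩).trans (by linarith)
  have T0 := Real.sqrt_nonneg (c * U)
  set T := √(c * U)
  have hcc : c ≤ 2 * c := by linarith
  have E : ∫ y in c..(2 * c), ((2 * c - y : ℝ) : ℂ) * φ2 y = φ (2 * c) - φ c - c * φ1 c := by
    rw [intervalIntegral.integral_eq_sub_of_hasDerivAt
      (f := fun y : ℝ => ((2 * c - y : ℝ) : ℂ) * φ1 y + φ y)]
    · push_cast; ring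
    · intro y _
      have d : HasDerivAt (fun y : ℝ => ((2 * c - y : ℝ) : ℂ)) (-1) y := by
        have := ((hasDerivAt_id y).const_sub (2 * c)).ofReal_comp
        simpa using this
      refine ((d.mul (H.hp1 y)).add (H.hp y)).congr_deriv ?_
      ring
    · apply Continuous.intervalIntegrable; fun_prop
  have n1 : ‖∫ y in c..(2 * c), ((2 * c - y : ℝ) : ℂ) * φ2 y‖ ≤
      c * ((∫ y in c..(2 * c), ‖w y‖) + K ^ 2 * c * (m + T)) := by
    refine (intervalIntegral.norm_integral_le_integral_norm hcc).trans ?_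
    have i : ∫ y in c..(2 * c), ‖((2 * c - y : ℝ) : ℂ) * φ2 y‖ ≤ 
        ∫ y in c..(2 * c), c * (‖w y‖ + K ^ 2 * (m + T)) := by
      apply int_mono hcc (by fun_prop) (by fun_prop)
      intro y hy
      rw [norm_mul, Complex.norm_of_nonneg (by linarith [hy.2])]
      have e := H.ell y ⟨by linarith [hy.1], by linarith [hy.2]⟩
      have e2 : ‖φ2 y‖ ≤ ‖w y‖ + K ^ 2 * (m + T) := by
        have : φ2 y = w y + (K:ℂ) ^ 2 * φ y := by rw [← e]; ring
        rw [this]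
        refine (norm_add_le _ _).trans ?_
        rw [norm_mul, norm_pow, Complex.norm_of_nonneg (by linarith)]
        gcongr
        exact hM y hy
      gcongr
      linarith [hy.1]
    refine i.trans (le_of_eq ?_)
    rw [intervalIntegral.integral_const_mul, intervalIntegral.integral_add
      (ii_of hcc (by fun_prop)) (by simp), intervalIntegral.integral_const, smul_eq_mul]
    ring
  have n2 : ∫ y in c..(2 * c), ‖w y‖ ≤ ∫ y in c..1, ‖w y‖ :=
    int_sub_le le_rfl hcc hc (by fun_prop) (fun y _ => norm_nonneg _)
  have n3 : c * ‖φ1 c‖ ≤ ‖φ (2 * c)‖ + ‖φ c‖ + 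
      ‖∫ y in c..(2 * c), ((2 * c - y : ℝ) : ℂ) * φ2 y‖ := by
    have e : (c:ℂ) * φ1 c = φ (2 * c) - φ c - ∫ y in c..(2 * c), ((2 * c - y : ℝ) : ℂ) * φ2 y := by
      rw [E]; ring
    have e' := congrArg norm e
    rw [norm_mul, Complex.norm_of_nonneg c0.le] at e'
    rw [e']
    exact (norm_sub_le _ _).trans (by gcongr; exact norm_sub_le _ _)
  have n4 := hM (2 * c) ⟨hcc, le_rfl⟩
  have n5 := hm c ⟨le_rfl, by linarith⟩
  rw [pc, norm_zero, add_zero] at n5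
  have n6 : c * (K ^ 2 * c * (m + T)) ≤ 1 / 16 * (m + T) := by
    have : (K * c) ^ 2 ≤ (1 / 4) ^ 2 := by gcongr
    calc c * (K ^ 2 * c * (m + T)) = (K * c) ^ 2 * (m + T) := by ring
      _ ≤ (1 / 4) ^ 2 * (m + T) := by gcongr
      _ = _ := by ring
  have n7 := mul_le_mul_of_nonneg_left n2 c0.le
  rw [mul_add] at n1
  linarith

end

section
variable {ε K a b c h s σ L m R : ℝ} {w w1 w2 φ φ1 φ2 f : ℝ → ℂ}

lemma outer (H : NOS ε K a s w w1 w2 φ φ1 φ2 f) (ha : a = b ^ 2) (c0 : 0 < c) (c1 : c < 1)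
    (hc : b - h ≤ c) (h0 : 0 < h) (hhb : h ≤ b) (m0 : 0 ≤ m) (hm : ‖φ c‖ ≤ m)
    (hR : l2 f * l2 w + ε * (‖w1 c‖ * ‖w c‖) + 2 * (m * l1 w) + 4 * (b * h) * l2 w ^ 2 ≤ R) :
    ∃ p p1 : ℝ → ℂ, (∀ y, HasDerivAt p (p1 y) y) ∧ Continuous p1 ∧ p c = 0 ∧
      (∀ y ∈ Set.Icc c 1, ‖φ y‖ ≤ m + ‖p y‖) ∧
      (∫ y in c..1, |a - y ^ 2| * ‖w y‖ ^ 2) +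
        2 * (∫ y in c..1, (‖p1 y‖ ^ 2 + K ^ 2 * ‖p y‖ ^ 2)) ≤ R := by
  have cw := H.cw
  obtain ⟨p, p1, p2, d1, d2, d3, pa, pb, el, hb, ab⟩ := decomp (α := c) (β := 1) (K := K) (m := m)
    c1 (by linarith [H.hK]) H.hp H.hp1 H.cp2 H.cw
    (fun y hy => H.ell y ⟨by linarith [hy.1], hy.2⟩) hm (by rw [H.pb]; simpa)
  refine ⟨p, p1, d1, cont_of_hd d2, pa, hb, ?_⟩
  have e := H.energy (by linarith : -1 ≤ c) c1.le le_rfl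
  rw [H.wb, norm_zero, mul_zero, add_zero] at e
  have e1 := (abs_le.1 e).1
  have e2 := (abs_le.1 ab).2
  have n : ∫ y in c..1, ‖w y‖ ≤ l1 w := 
    int_sub_le (by linarith) c1.le le_rfl (by fun_prop) (fun y _ => norm_nonneg _)
  have n' := mul_le_mul_of_nonneg_left n m0
  have W : ∫ y in c..1, ‖w y‖ ^ 2 ≤ l2 w ^ 2 := l2_sub cw (by linarith) c1.le le_rfl
  have A : ∫ y in c..1, |a - y ^ 2| * ‖w y‖ ^ 2 ≤ 
      (-∫ y in c..1, (a - y ^ 2) * ‖w y‖ ^ 2) + 4 * (b * h) * ∫ y in c..1, ‖w y‖ ^ 2 := by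
    rw [← intervalIntegral.integral_neg, ← intervalIntegral.integral_const_mul,
      ← intervalIntegral.integral_add (ii_of c1.le (by fun_prop)) (ii_of c1.le (by fun_prop))]
    apply int_mono c1.le (by fun_prop) (by fun_prop)
    intro y hy
    have : |a - y ^ 2| ≤ -(a - y ^ 2) + 4 * (b * h) := by
      have bh : 0 ≤ b * h := mul_nonneg (by linarith) h0.le
      apply abs_le.2
      constructor
      · linarith
      · rw [ha]; nlinarith [hy.1]
    calc _ ≤ (-(a - y ^ 2) + 4 * (b * h)) * ‖w y‖ ^ 2 := by gcongr
      _ = _ := by ring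
  have bh : 0 ≤ 4 * (b * h) := by nlinarith
  have := mul_le_mul_of_nonneg_left W bh
  linarith

lemma I_side (H : NOS ε K a s w w1 w2 φ φ1 φ2 f) (ha : a = b ^ 2) (c0 : 0 < c) (c1 : c ≤ 1)
    (h0 : 0 < h) (hb : 0 < b) 
    (hJ : ∫ y in (-1:ℝ)..1, (|b ^ 2 - y ^ 2| + b * h)⁻¹ ≤ L / b) :
    (∫ y in c..1, ‖w y‖) ^ 2 ≤ L / b * ((∫ y in c..1, |a - y ^ 2| * ‖w y‖ ^ 2) + 
      b * h * l2 w ^ 2) := by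
  have cw := H.cw
  subst ha
  have pos : ∀ y, 0 < |b ^ 2 - y ^ 2| + b * h := fun y => by positivity
  have e := cs_weight c1 (ρ := fun y => |b ^ 2 - y ^ 2| + b * h) (g := fun y => ‖w y‖)
    (by fun_prop) (by fun_prop) (fun y _ => pos y)
  have J : ∫ y in c..1, (|b ^ 2 - y ^ 2| + b * h)⁻¹ ≤ L / b := by
    refine (int_sub_le (γ := -1) (δ := 1) (by linarith) c1 le_rfl 
      (ContinuousOn.inv₀ (by fun_prop) (fun y _ => (pos y).ne')) (fun y _ => ?_)).trans hJ
    exact (inv_pos.2 (pos y)).le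
  have J0 : 0 ≤ ∫ y in c..1, (|b ^ 2 - y ^ 2| + b * h)⁻¹ :=
    intervalIntegral.integral_nonneg c1 (fun y _ => (inv_pos.2 (pos y)).le)
  have X : ∫ y in c..1, (|b ^ 2 - y ^ 2| + b * h) * ‖w y‖ ^ 2 ≤
      (∫ y in c..1, |b ^ 2 - y ^ 2| * ‖w y‖ ^ 2) + b * h * l2 w ^ 2 := by
    have W : ∫ y in c..1, ‖w y‖ ^ 2 ≤ l2 w ^ 2 := l2_sub cw (by linarith) c1 le_rfl
    have : ∫ y in c..1, (|b ^ 2 - y ^ 2| + b * h) * ‖w y‖ ^ 2 = 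
        (∫ y in c..1, |b ^ 2 - y ^ 2| * ‖w y‖ ^ 2) + b * h * ∫ y in c..1, ‖w y‖ ^ 2 := by
      rw [← intervalIntegral.integral_const_mul, ← intervalIntegral.integral_add
        (ii_of c1 (by fun_prop)) (ii_of c1 (by fun_prop))]
      congr 1; ext y; ring
    rw [this]
    gcongr
  have X0 : 0 ≤ ∫ y in c..1, (|b ^ 2 - y ^ 2| + b * h) * ‖w y‖ ^ 2 :=
    intervalIntegral.integral_nonneg c1 (fun y _ => mul_nonneg (pos y).le (by positivity))
  exact e.trans (mul_le_mul J X X0 (J0.trans J))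

lemma B4 (H : NOS ε K a s w w1 w2 φ φ1 φ2 f) (ha : a = b ^ 2) 
    (h0 : 0 < h) (hb : 0 < b) 
    (hJ : ∫ y in (-1:ℝ)..1, (|b ^ 2 - y ^ 2| + b * h)⁻¹ ≤ L / b) :
    l1 w ^ 2 ≤ L / b * ((∫ y in (-1:ℝ)..1, |a - y ^ 2| * ‖w y‖ ^ 2) + 
      b * h * l2 w ^ 2) := by
  have cw := H.cw
  subst ha
  have c1 : (-1:ℝ) ≤ 1 := by norm_num
  have pos : ∀ y, 0 < |b ^ 2 - y ^ 2| + b * h := fun y => by positivity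
  have e := cs_weight c1 (ρ := fun y => |b ^ 2 - y ^ 2| + b * h) (g := fun y => ‖w y‖)
    (by fun_prop) (by fun_prop) (fun y _ => pos y)
  have X : ∫ y in (-1:ℝ)..1, (|b ^ 2 - y ^ 2| + b * h) * ‖w y‖ ^ 2 =
      (∫ y in (-1:ℝ)..1, |b ^ 2 - y ^ 2| * ‖w y‖ ^ 2) + b * h * l2 w ^ 2 := by
    rw [l2_sq, ← intervalIntegral.integral_const_mul, ← intervalIntegral.integral_add
        (ii_of c1 (by fun_prop)) (ii_of c1 (by fun_prop))]
    congr 1; ext y; ring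
  have X0 : 0 ≤ ∫ y in (-1:ℝ)..1, (|b ^ 2 - y ^ 2| + b * h) * ‖w y‖ ^ 2 :=
    intervalIntegral.integral_nonneg c1 (fun y _ => mul_nonneg (pos y).le (by positivity))
  rw [← X]
  exact e.trans (by gcongr)

lemma w_int_bound (H : NOS ε K a s w w1 w2 φ φ1 φ2 f) (c0 : 0 < c) (c1 : 2 * c ≤ 1)
    (hKc : K * c ≤ 1 / 4) {p : ℝ → ℂ} (cp : Continuous p) (m0 : 0 ≤ m)
    (hm : ∀ y ∈ Set.Icc (-c) c, ‖φ y‖ ≤ m + ‖p y‖) (R0 : 0 ≤ R)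
    (hp : 2 * (K ^ 2 * ∫ y in (-c)..c, ‖p y‖ ^ 2) ≤ R) :
    c * ‖∫ y in (-c)..c, w y‖ ≤ c * ‖φ1 c‖ + c * ‖φ1 (-c)‖ + m + √(c * R) := by
  have cw := H.cw; have cφ := H.cp; have cφ2 := H.cp2
  have hcc : -c ≤ c := by linarith
  have K0 := H.hK
  have e : ∫ y in (-c)..c, w y = φ1 c - φ1 (-c) - (K:ℂ) ^ 2 * ∫ y in (-c)..c, φ y := by
    rw [← intervalIntegral.integral_eq_sub_of_hasDerivAt (fun t _ => H.hp1 t)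
      (cφ2.intervalIntegrable _ _), ← intervalIntegral.integral_const_mul, 
      ← intervalIntegral.integral_sub (cφ2.intervalIntegrable _ _)
        (Continuous.intervalIntegrable (by fun_prop) _ _)]
    apply intervalIntegral.integral_congr
    intro y hy
    rw [Set.uIcc_of_le hcc] at hy
    exact (H.ell y ⟨by linarith [hy.1], by linarith [hy.2]⟩).symm
  have n1 : ‖∫ y in (-c)..c, w y‖ ≤ ‖φ1 c‖ + ‖φ1 (-c)‖ + K ^ 2 * ‖∫ y in (-c)..c, φ y‖ := by
    rw [e]
    refine (norm_sub_le _ _).trans ?_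
    rw [norm_mul, norm_pow, Complex.norm_of_nonneg (by linarith)]
    gcongr
    exact norm_sub_le _ _
  have n2 : ‖∫ y in (-c)..c, φ y‖ ≤ 2 * c * m + ∫ y in (-c)..c, ‖p y‖ := by
    refine (intervalIntegral.norm_integral_le_integral_norm hcc).trans ?_
    refine (int_mono hcc (g := fun y => m + ‖p y‖) (by fun_prop) (by fun_prop) hm).trans ?_
    rw [intervalIntegral.integral_add (by simp) (ii_of hcc (by fun_prop)),
      intervalIntegral.integral_const, smul_eq_mul]
    apply le_of_eq; ring
  have n3 := cs_one hcc (g := fun y => ‖p y‖) (by fun_prop)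
  set P := ∫ y in (-c)..c, ‖p y‖
  have P0 : 0 ≤ P := intervalIntegral.integral_nonneg hcc (fun y _ => norm_nonneg _)
  set S := ∫ y in (-c)..c, ‖p y‖ ^ 2
  have S0 : 0 ≤ S := intervalIntegral.integral_nonneg hcc (fun y _ => by positivity)
  have kc2 : (K * c) ^ 2 ≤ 1 / 16 := by
    calc _ ≤ (1 / 4 : ℝ) ^ 2 := by gcongr
      _ = _ := by norm_num
  have n4 : c * K ^ 2 * P ≤ √(c * R) := by
    apply Real.le_sqrt_of_sq_le
    calc (c * K ^ 2 * P) ^ 2 = c ^ 2 * K ^ 4 * P ^ 2 := by ring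
      _ ≤ c ^ 2 * K ^ 4 * ((c - -c) * S) := by gcongr
      _ = (K * c) ^ 2 * (c * (2 * (K ^ 2 * S))) := by ring
      _ ≤ 1 / 16 * (c * R) := by gcongr
      _ ≤ c * R := by linarith [mul_nonneg c0.le R0]
  have n5 : c * K ^ 2 * (2 * c * m) ≤ m := by
    calc c * K ^ 2 * (2 * c * m) = 2 * (K * c) ^ 2 * m := by ring
      _ ≤ 2 * (1 / 16) * m := by gcongr
      _ ≤ m := by linarith
  calc c * ‖∫ y in (-c)..c, w y‖ ≤ c * (‖φ1 c‖ + ‖φ1 (-c)‖ + K ^ 2 * (2 * c * m + P)) := by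
        gcongr
        exact n1.trans (by gcongr)
    _ = c * ‖φ1 c‖ + c * ‖φ1 (-c)‖ + c * K ^ 2 * (2 * c * m) + c * K ^ 2 * P := by ring
    _ ≤ _ := by linarith

end

section
variable {ε K a b c h s σ L m R : ℝ} {w w1 w2 φ φ1 φ2 f : ℝ → ℂ}

lemma foursq (p q r t : ℝ) : (p+q+r+t)^2 ≤ 4*(p^2+q^2+r^2+t^2) := by
  linarith [sq_nonneg (p-q), sq_nonneg (p-r), sq_nonneg (p-t), sq_nonneg (q-r),
    sq_nonneg (q-t), sq_nonneg (r-t)]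

lemma flip_int {g : ℝ → ℝ} {c : ℝ} : ∫ y in c..1, g (-y) = ∫ y in (-1)..(-c), g y := by
  rw [intervalIntegral.integral_comp_neg]

/-- the small frequency case -/
lemma case2 (H : NOS ε K a s w w1 w2 φ φ1 φ2 f) (ha : a = b ^ 2) (h0 : 0 < h)
    (hhb : 4 * h ≤ b) (m0 : 0 ≤ m) (hL : 1 ≤ L)
    (hJ : ∫ y in (-1:ℝ)..1, (|b ^ 2 - y ^ 2| + b * h)⁻¹ ≤ L / b)
    (hc1 : b - h ≤ c) (hc2 : c ≤ b - h / 2) (hcK : K * c ≤ 1 / 4) {p p1 p2 : ℝ → ℂ}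
    (hp : ∀ y, HasDerivAt p (p1 y) y) (hp1 : ∀ y, HasDerivAt p1 (p2 y) y) (cp2 : Continuous p2)
    (hpw : ∀ y ∈ Set.Icc (-c) c, p2 y - (K:ℂ) ^ 2 * p y = w y)
    (pa : p (-c) = 0) (pb : p c = 0) (hm : ∀ y ∈ Set.Icc (-c) c, ‖φ y‖ ≤ m + ‖p y‖)
    (hQ : (∫ y in (-c)..c, (a - y ^ 2) * ‖w y‖ ^ 2) -
      2 * ∫ y in (-c)..c, (‖p1 y‖ ^ 2 + K ^ 2 * ‖p y‖ ^ 2) ≤ R)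
    (hbR : b * h * l2 w ^ 2 ≤ R) {Ur Ul Ir Il : ℝ} (hUr : 2 * Ur ≤ R) (hUl : 2 * Ul ≤ R)
    (Ir0 : 0 ≤ Ir) (Il0 : 0 ≤ Il)
    (hIr : Ir ^ 2 ≤ L / b * (2 * R)) (hIl : Il ^ 2 ≤ L / b * (2 * R))
    (hφr : c * ‖φ1 c‖ ≤ 3 * m + 2 * √(c * Ur) + c * Ir)
    (hφl : c * ‖φ1 (-c)‖ ≤ 3 * m + 2 * √(c * Ul) + c * Il) :
    (∫ y in (-c)..c, (a - y ^ 2) * ‖w y‖ ^ 2) ≤ 13000 * (L * R + m ^ 2 / b) := by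
  have b0 : 0 < b := by linarith
  have c0 : 0 < c := by linarith
  have cb : c ≤ b := by linarith
  have K1 := H.hK
  have c14 : c ≤ 1 / 4 := le_trans (le_mul_of_one_le_left c0.le K1) hcK
  have hca : c ^ 2 < a := by rw [ha]; exact pow_lt_pow_left₀ (by linarith) c0.le (by norm_num)
  obtain ⟨R0, h2, h3⟩ := coerc2 c0 hca (by rw [ha]; linarith [pow_le_pow_left₀ b0.le (by linarith : b ≤ 2 * c) 2]) hp hp1 cp2 H.cw hpw pa pb hQ
  have JJ : c * ∫ y in (-c)..c, (a - y ^ 2)⁻¹ ≤ 3 * L := by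
    have pos : ∀ y, 0 < |b ^ 2 - y ^ 2| + b * h := fun y => by positivity
    have V : ∀ y ∈ Set.Icc (-c) c, b * h / 2 ≤ a - y ^ 2 := by
      intro y hy
      have : y ^ 2 ≤ c ^ 2 := sq_le_sq' hy.1 hy.2
      rw [ha]
      have t1 := mul_self_nonneg (b - c)
      have t2 := mul_nonneg c0.le (by linarith : 0 ≤ b - c - h / 2)
      have t3 := mul_nonneg b0.le (by linarith : 0 ≤ b - c - h / 2)
      have t4 := mul_pos c0 h0
      linarith
    have bh : 0 < b * h := by positivity
    have J1 : ∫ y in (-c)..c, (a - y ^ 2)⁻¹ ≤ 3 * (L / b) := by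
      have i1 : ∫ y in (-c)..c, (a - y ^ 2)⁻¹ ≤ 
          ∫ y in (-c)..c, 3 * (|b ^ 2 - y ^ 2| + b * h)⁻¹ := by
        apply int_mono (by linarith)
        · exact ContinuousOn.inv₀ (by fun_prop) (fun y hy => by have := V y hy; linarith)
        · exact (ContinuousOn.inv₀ (by fun_prop) (fun y _ => (pos y).ne')).const_smul (3:ℝ)
        · intro y hy
          have v := V y hy
          rw [show 3 * (|b ^ 2 - y ^ 2| + b * h)⁻¹ = ((|b ^ 2 - y ^ 2| + b * h) / 3)⁻¹ by
            rw [inv_div]; rfl]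
          apply inv_anti₀ (by have := pos y; positivity)
          rw [← ha, abs_of_nonneg (by linarith)]
          linarith
      rw [intervalIntegral.integral_const_mul] at i1
      refine i1.trans ?_
      gcongr
      refine (int_sub_le (γ := -1) (δ := 1) (by linarith) (by linarith) (by linarith) 
        (ContinuousOn.inv₀ (by fun_prop) (fun y _ => (pos y).ne')) (fun y _ => ?_)).trans hJ
      exact (inv_pos.2 (pos y)).le
    calc _ ≤ c * (3 * (L / b)) := by gcongr
      _ ≤ b * (3 * (L / b)) := by gcongr
      _ = 3 * L := by field_simp
  have wi := w_int_bound H c0 (by linarith) hcK (cont_of_hd hp) m0 hm R0 h2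
  set X := ‖∫ y in (-c)..c, w y‖
  have X0 : 0 ≤ X := norm_nonneg _
  have T2 : √(c * R) ^ 2 = c * R := Real.sq_sqrt (by positivity)
  have Tr : √(c * Ur) ≤ √(c * R) := by
    apply Real.sqrt_le_sqrt; gcongr; linarith
  have Tl : √(c * Ul) ≤ √(c * R) := by
    apply Real.sqrt_le_sqrt; gcongr; linarith
  set T := √(c * R)
  have s1 : c * X ≤ 7 * m + 5 * T + c * Ir + c * Il := by linarith
  have s2 : (c * X) ^ 2 ≤ 4 * ((7 * m) ^ 2 + (5 * T) ^ 2 + (c * Ir) ^ 2 + (c * Il) ^ 2) :=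
    (pow_le_pow_left₀ (by positivity) s1 2).trans (foursq _ _ _ _)
  have cI : ∀ I : ℝ, I ^ 2 ≤ L / b * (2 * R) → (c * I) ^ 2 ≤ c * (2 * L * R) := by
    intro I hI
    calc (c * I) ^ 2 = c * (c * I ^ 2) := by ring
      _ ≤ c * (b * (L / b * (2 * R))) := by gcongr
      _ = _ := by field_simp
  have s3 := cI Ir hIr
  have s4 := cI Il hIl
  have s5 : c * X ^ 2 ≤ 196 * (2 * (m ^ 2 / b)) + 100 * R + 16 * (L * R) := by
    have q : c * (c * X ^ 2) ≤ c * (196 * (2 * (m ^ 2 / b)) + 100 * R + 16 * (L * R)) := by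
      have q1 : m ^ 2 ≤ c * (2 * (m ^ 2 / b)) := by
        rw [show c * (2 * (m ^ 2 / b)) = m ^ 2 * ((2 * c) / b) by ring]
        apply le_mul_of_one_le_right (by positivity)
        rw [le_div_iff₀ b0]; linarith
      have q2 : c * (c * X ^ 2) = (c * X) ^ 2 := by ring
      rw [q2]
      have q3 : (5 * T) ^ 2 = 25 * (c * R) := by rw [mul_pow, T2]; ring
      rw [q3] at s2
      linarith
    exact le_of_mul_le_mul_left q c0
  have LR : R ≤ L * R := le_mul_of_one_le_left R0 hL
  have s6 : 32 * (c * ∫ y in (-c)..c, (a - y ^ 2)⁻¹) * R ≤ 32 * (3 * L) * R := by gcongr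
  have mb : 0 ≤ m ^ 2 / b := by positivity
  linarith

set_option maxHeartbeats 2000000 in
lemma E2_bound (H : NOS ε K a s w w1 w2 φ φ1 φ2 f) (hb1 : b ≤ 1) (ha : a = b ^ 2) (h0 : 0 < h)
    (hhb : 4 * h ≤ b) (m0 : 0 ≤ m) (hL : 1 ≤ L)
    (hJ : ∫ y in (-1:ℝ)..1, (|b ^ 2 - y ^ 2| + b * h)⁻¹ ≤ L / b)
    (hmr : ∀ y ∈ Set.Icc (b - h) b, ‖φ y‖ ≤ m)
    (hml : ∀ y ∈ Set.Icc (b - h) b, ‖φ (-y)‖ ≤ m)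
    (hR : l2 f * l2 w + ε * (4 * (l2 w * l2 w1) / h) + 2 * (m * l1 w) + 
      4 * (b * h) * l2 w ^ 2 = R) :
    (∫ y in (-1:ℝ)..1, |a - y ^ 2| * ‖w y‖ ^ 2) ≤ 13002 * (L * R + m ^ 2 / b) := by
  have cw := H.cw; have hε := H.hε
  have b0 : 0 < b := by linarith
  obtain ⟨c, hc, gc⟩ := choose_c H hb1 h0 (by linarith)
  have gc' : ‖w1 c‖ * ‖w c‖ + ‖w1 (-c)‖ * ‖w (-c)‖ ≤ 4 * (l2 w * l2 w1) / h := by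
    rw [le_div_iff₀ h0]; linarith
  have g1 : 0 ≤ ‖w1 c‖ * ‖w c‖ := by positivity
  have g2 : 0 ≤ ‖w1 (-c)‖ * ‖w (-c)‖ := by positivity
  have c0 : 0 < c := by linarith [hc.1]
  have c1 : c < 1 := by linarith [hc.2]
  have cb : c ≤ b := by linarith [hc.2]
  have mr := hmr c ⟨hc.1, cb⟩
  have ml := hml c ⟨hc.1, cb⟩
  obtain ⟨pr, pr1, r1, r2, r3, r4, r5⟩ := outer (R := R) H ha c0 c1 hc.1 h0 (by linarith) m0 mr
    (by rw [← hR]; gcongr; linarith)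
  have fl1 : l1 (fun y => w (-y)) = l1 w := by
    unfold l1
    rw [intervalIntegral.integral_comp_neg (fun y => ‖w y‖)]; simp
  obtain ⟨pl, pl1, q1, q2, q3, q4, q5⟩ := outer (R := R) H.flip ha c0 c1 hc.1 h0 (by linarith) m0 ml
    (by rw [l2_flip, l2_flip, fl1, ← hR]; gcongr; rw [norm_neg]; linarith)
  obtain ⟨p, p1, p2, d1, d2, d3, pa, pb, el, hb, ab⟩ := decomp (α := -c) (β := c) (K := K) (m := m)
    (by linarith) (by linarith [H.hK]) H.hp H.hp1 H.cp2 H.cw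
    (fun y hy => H.ell y ⟨by linarith [hy.1], by linarith [hy.2]⟩) ml mr
  have W0 := l2_nonneg w
  have W10 := l2_nonneg w1
  have F0 := l2_nonneg f
  have N0 := l1_nonneg w
  have R0 : 0 ≤ R := by rw [← hR]; positivity
  have LR : R ≤ L * R := le_mul_of_one_le_left R0 hL
  have bR : b * h * l2 w ^ 2 ≤ R := by
    have : 0 ≤ l2 f * l2 w + ε * (4 * (l2 w * l2 w1) / h) + 2 * (m * l1 w) := by positivity
    have : 0 ≤ b * h * l2 w ^ 2 := by positivity
    linarith
  have hQ : (∫ y in (-c)..c, (a - y ^ 2) * ‖w y‖ ^ 2) -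
      2 * ∫ y in (-c)..c, (‖p1 y‖ ^ 2 + K ^ 2 * ‖p y‖ ^ 2) ≤ R := by
    have e := (abs_le.1 (H.energy (by linarith : -1 ≤ -c) (by linarith : -c ≤ c) c1.le)).2
    have e2 := (abs_le.1 ab).1
    have n : ∫ y in (-c)..c, ‖w y‖ ≤ l1 w := 
      int_sub_le (by linarith) (by linarith) c1.le (by fun_prop) (fun y _ => norm_nonneg _)
    have n' := mul_le_mul_of_nonneg_left n m0
    have e3 := mul_le_mul_of_nonneg_left gc' hε.le
    have : 0 ≤ b * h * l2 w ^ 2 := by positivity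
    linarith
  have er : ∫ y in c..1, |a - y ^ 2| * ‖w (-y)‖ ^ 2 = 
      ∫ y in (-1)..(-c), |a - y ^ 2| * ‖w y‖ ^ 2 := by
    rw [← flip_int (g := fun y => |a - y ^ 2| * ‖w y‖ ^ 2)]; simp
  have spl : ∫ y in (-1:ℝ)..1, |a - y ^ 2| * ‖w y‖ ^ 2 = 
      (∫ y in (-1)..(-c), |a - y ^ 2| * ‖w y‖ ^ 2) + ((∫ y in (-c)..c, (a - y ^ 2) * ‖w y‖ ^ 2) +
        ∫ y in c..1, |a - y ^ 2| * ‖w y‖ ^ 2) := by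
    rw [int_split (β := -c) (by linarith) (by linarith) (by fun_prop),
      int_split (α := -c) (β := c) (by linarith) (by linarith) (by fun_prop)]
    congr 2
    apply intervalIntegral.integral_congr
    intro y hy
    rw [Set.uIcc_of_le (by linarith)] at hy
    simp only
    rw [abs_of_nonneg]
    have : y ^ 2 ≤ c ^ 2 := sq_le_sq' hy.1 hy.2
    rw [ha]; linarith [pow_le_pow_left₀ c0.le cb 2]
  have Ur0 : 0 ≤ ∫ y in c..1, (‖pr1 y‖ ^ 2 + K ^ 2 * ‖pr y‖ ^ 2) :=
    intervalIntegral.integral_nonneg c1.le (fun y _ => by positivity)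
  have Ul0 : 0 ≤ ∫ y in c..1, (‖pl1 y‖ ^ 2 + K ^ 2 * ‖pl y‖ ^ 2) :=
    intervalIntegral.integral_nonneg c1.le (fun y _ => by positivity)
  have Ar0 : 0 ≤ ∫ y in c..1, |a - y ^ 2| * ‖w y‖ ^ 2 :=
    intervalIntegral.integral_nonneg c1.le (fun y _ => by positivity)
  have Al0 : 0 ≤ ∫ y in c..1, |a - y ^ 2| * ‖w (-y)‖ ^ 2 :=
    intervalIntegral.integral_nonneg c1.le (fun y _ => by positivity)
  have mb : 0 ≤ m ^ 2 / b := by positivity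
  have hcc2 : c ^ 2 < a := by rw [ha]; exact pow_lt_pow_left₀ (by linarith [hc.2]) c0.le (by norm_num)
  have Ain : (∫ y in (-c)..c, (a - y ^ 2) * ‖w y‖ ^ 2) ≤ 13000 * (L * R + m ^ 2 / b) := by
    rcases le_total (1 / 4) (K * c) with hk | hk
    · have := coerc1 c0 hcc2 (by linarith [H.hK]) hk d1 d2 d3 H.cw el pa pb
      linarith
    · have K1 := H.hK
      have c14 : c ≤ 1 / 4 := le_trans (le_mul_of_one_le_left c0.le K1) hk
      have Ir := I_side H ha c0 c1.le h0 b0 hJ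
      have Il := I_side H.flip ha c0 c1.le h0 b0 hJ
      rw [l2_flip] at Il
      have hr := phi1_bound H c0 (by linarith) hk m0 r1 r2 r3 r4
      have hl := phi1_bound H.flip c0 (by linarith) hk m0 q1 q2 q3 q4
      simp only [norm_neg] at hl
      refine case2 H ha h0 hhb m0 hL hJ hc.1 hc.2 hk d1 d2 d3 el pa pb hb hQ bR
        (by linarith) (by linarith) 
        (intervalIntegral.integral_nonneg c1.le (fun y _ => norm_nonneg _))
        (intervalIntegral.integral_nonneg c1.le (fun y _ => norm_nonneg _))
        (Ir.trans ?_) (Il.trans ?_) hr hl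
      · gcongr; linarith
      · gcongr; linarith
  rw [spl, ← er]
  linarith

end

lemma os_closure {D r L F x x1 y μ n v : ℝ} (hD : 1 ≤ D) (hr : 1 ≤ r) (hL : 1 ≤ L)
    (hrL : 600000 * D ^ 2 * L ^ 4 ≤ r) (F0 : 0 ≤ F) (x0 : 0 ≤ x) (y0 : 0 ≤ y)
    (μ0 : 0 ≤ μ) (n0 : 0 ≤ n)
    (e1 : x1 ^ 2 ≤ F * x) (e2 : r ^ 2 * x ^ 2 ≤ 3 * y + 8 * r ^ 2 * (x * x1))
    (e3 : μ ≤ 300 * (F ^ 2 * r + r ^ 3 * x1 ^ 2 + r ^ 3 * x ^ 2 + (y + F * x) / r))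
    (e4 : r ^ 2 * n ≤ L * (y + r * x ^ 2))
    (e5 : y ≤ D * (L * (F * x + 4 * r * (x * x1) + 2 * v + 4 * r * x ^ 2) + μ / r ^ 2))
    (hv : v ^ 2 = μ * n) : x ^ 2 ≤ 20000 * F ^ 2 ∧ n ≤ 20001 * F ^ 2 := by
  have r0 : 0 < r := by linarith
  have L0 : 0 < L := by linarith
  obtain ⟨S, hS⟩ : ∃ S, S = F ^ 2 + x ^ 2 := ⟨_, rfl⟩
  have S0 : 0 ≤ S := by rw [hS]; positivity
  have FS : F ^ 2 ≤ S := by rw [hS]; linarith [sq_nonneg x]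
  have xS : x ^ 2 ≤ S := by rw [hS]; linarith [sq_nonneg F]
  have fxS : F * x ≤ S := by rw [hS]; linarith [sq_nonneg (F - x), mul_nonneg F0 x0]
  have x1S : x1 ^ 2 ≤ S := e1.trans fxS
  have xxS : x * x1 ≤ S := by linarith [sq_nonneg (x - x1)]
  have r3 : 1 ≤ r ^ 3 := one_le_pow₀ hr
  have rr3 : r ≤ r ^ 3 := le_self_pow₀ hr (by norm_num)
  have m1 : μ ≤ 300 * (4 * (r ^ 3 * S) + y / r) := by
    have a1 : F ^ 2 * r ≤ S * r ^ 3 := by gcongr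
    have a2 : r ^ 3 * x1 ^ 2 ≤ r ^ 3 * S := by gcongr
    have a3 : r ^ 3 * x ^ 2 ≤ r ^ 3 * S := by gcongr
    have a4 : (y + F * x) / r ≤ y / r + r ^ 3 * S := by
      rw [add_div]
      have : F * x / r ≤ S := by
        rw [div_le_iff₀ r0]; exact fxS.trans (le_mul_of_one_le_right S0 hr)
      have : S ≤ r ^ 3 * S := le_mul_of_one_le_left S0 r3
      linarith
    linarith
  have n1 : n ≤ L / r ^ 2 * (y + r * S) := by
    rw [div_mul_eq_mul_div, le_div_iff₀ (by positivity)]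
    have : L * (y + r * x ^ 2) ≤ L * (y + r * S) := by gcongr
    linarith
  have D2 : D ≤ D ^ 2 := le_self_pow₀ hD (by norm_num)
  have D21 : 1 ≤ D ^ 2 := one_le_pow₀ hD
  have L34 : L ^ 3 ≤ L ^ 4 := pow_le_pow_right₀ hL (by norm_num)
  have L13 : L ≤ L ^ 3 := le_self_pow₀ hL (by norm_num)
  have L36 : L ^ 3 ≤ L ^ 6 := pow_le_pow_right₀ hL (by norm_num)
  have L31 : 1 ≤ L ^ 3 := one_le_pow₀ hL
  have k1 : 600000 * D ^ 2 * L ^ 3 ≤ r := le_trans (by gcongr) hrL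
  have k2 : 600000 * D ≤ r := by
    have : D ≤ D ^ 2 * L ^ 3 := D2.trans (le_mul_of_one_le_right (by positivity) L31)
    linarith
  have hv2 : v ^ 2 ≤ 300 * L * (5 * (r * S * y) + 4 * (r * S) ^ 2 + y ^ 2 / r ^ 3) := by
    rw [hv]
    have : μ * n ≤ (300 * (4 * (r ^ 3 * S) + y / r)) * (L / r ^ 2 * (y + r * S)) := by gcongr
    refine this.trans ?_
    have e : (300 * (4 * (r ^ 3 * S) + y / r)) * (L / r ^ 2 * (y + r * S)) = 
      300 * L * (4 * (r * S * y) + 4 * (r * S) ^ 2 + y ^ 2 / r ^ 3 + S * y / r ^ 2) := by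
      field_simp; ring
    rw [e]
    have : S * y / r ^ 2 ≤ r * S * y := by
      rw [div_le_iff₀ (by positivity)]
      have : S * y ≤ S * y * r ^ 3 := le_mul_of_one_le_right (by positivity) r3
      linarith
    have : 300 * L * (4 * (r * S * y) + 4 * (r * S) ^ 2 + y ^ 2 / r ^ 3 + S * y / r ^ 2) ≤
      300 * L * (4 * (r * S * y) + 4 * (r * S) ^ 2 + y ^ 2 / r ^ 3 + r * S * y) := by gcongr
    linarith
  have hLv : 2 * D * L * v ≤ y / 4 + 12000 * D ^ 2 * L ^ 3 * (r * S) := by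
    refine le_of_sq_le_sq ?_ (by positivity)
    obtain ⟨G, hG⟩ : ∃ G, G = D ^ 2 * L ^ 3 := ⟨_, rfl⟩
    obtain ⟨T, hT⟩ : ∃ T, T = r * S := ⟨_, rfl⟩
    have G1 : 1 ≤ G := by rw [hG]; exact one_le_mul_of_one_le_of_one_le D21 L31
    have T0 : 0 ≤ T := by rw [hT]; positivity
    have g1 : (2 * D * L * v) ^ 2 ≤ 1200 * G * (5 * (T * y) + 4 * T ^ 2 + y ^ 2 / r ^ 3) := by
      have := mul_le_mul_of_nonneg_left hv2 (by positivity : 0 ≤ 4 * D ^ 2 * L ^ 2)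
      rw [hG, hT]
      calc (2 * D * L * v) ^ 2 = 4 * D ^ 2 * L ^ 2 * v ^ 2 := by ring
        _ ≤ _ := this
        _ = _ := by ring
    have g2 : 1200 * G * (y ^ 2 / r ^ 3) ≤ y ^ 2 / 16 := by
      rw [mul_div_assoc', div_le_iff₀ (by positivity)]
      have : 19200 * G * y ^ 2 ≤ r ^ 3 * y ^ 2 := by gcongr; rw [hG]; linarith
      linarith
    have g3 : G * T ^ 2 ≤ G * (G * T ^ 2) := by
      gcongr; exact le_mul_of_one_le_left (by positivity) G1
    have g4 : 0 ≤ G * T ^ 2 := by positivity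
    have e : (y / 4 + 12000 * D ^ 2 * L ^ 3 * (r * S)) ^ 2 = 
      y ^ 2 / 16 + 6000 * G * (T * y) + 144000000 * (G * (G * T ^ 2)) := by rw [hG, hT]; ring
    rw [e]
    linarith
  have y1 : y ≤ 50000 * D ^ 2 * L ^ 3 * (r * S) := by
    have b1 : D * (L * (F * x + 4 * r * (x * x1) + 2 * v + 4 * r * x ^ 2) + μ / r ^ 2) ≤
      D * L * (9 * (r * S)) + 2 * D * L * v + D * (1200 * (r * S) + 300 * y / r ^ 3) := by
      have c1 : F * x ≤ r * S := fxS.trans (le_mul_of_one_le_left S0 hr)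
      have c2 : r * (x * x1) ≤ r * S := by gcongr
      have c3 : r * x ^ 2 ≤ r * S := by gcongr
      have c4 : μ / r ^ 2 ≤ 1200 * (r * S) + 300 * y / r ^ 3 := by
        rw [div_le_iff₀ (by positivity)]
        refine m1.trans (le_of_eq ?_)
        field_simp
        ring
      have c5 : D * L * (F * x + 4 * r * (x * x1) + 4 * r * x ^ 2) ≤ D * L * (9 * (r * S)) := by
        gcongr; linarith
      have c6 := mul_le_mul_of_nonneg_left c4 (by linarith : 0 ≤ D)
      linarith
    have b2 : D * (300 * y / r ^ 3) ≤ y / 4 := by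
      rw [mul_div_assoc', div_le_iff₀ (by positivity)]
      have : 1200 * D * y ≤ r ^ 3 * y := by gcongr; linarith
      linarith
    have b3 : D * L * (r * S) ≤ D ^ 2 * L ^ 3 * (r * S) := by gcongr
    have b4 : D * (r * S) ≤ D ^ 2 * L ^ 3 * (r * S) := by
      gcongr
      exact D2.trans (le_mul_of_one_le_right (by positivity) L31)
    linarith
  have y2 : 12 * y ≤ r ^ 2 * S := by
    have : 600000 * D ^ 2 * L ^ 3 * (r * S) ≤ r * (r * S) := by gcongr
    linarith
  have X : x ^ 2 ≤ 20000 * F ^ 2 := by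
    have q : r ^ 2 * x ^ 2 ≤ r ^ 2 * (S / 4 + 8 * (x * x1)) := by linarith
    have q := le_of_mul_le_mul_left q (by positivity)
    have q1 : 8 * (x * x1) ≤ x ^ 2 / 4 + 64 * x1 ^ 2 := by
      linarith [sq_nonneg (x / 2 - 8 * x1)]
    have q2 : 64 * (F * x) ≤ x ^ 2 / 4 + 4096 * F ^ 2 := by
      linarith [sq_nonneg (x / 2 - 64 * F)]
    rw [hS] at q
    linarith [sq_nonneg F]
  refine ⟨X, ?_⟩
  have : r ^ 2 * n ≤ r ^ 2 * S := by
    refine e4.trans ?_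
    have t1 : L * y ≤ L * (50000 * D ^ 2 * L ^ 3 * (r * S)) := by gcongr
    have t2 : L * (r * x ^ 2) ≤ D ^ 2 * L ^ 4 * (r * S) := by
      have : L ≤ D ^ 2 * L ^ 4 := (L13.trans L34).trans (le_mul_of_one_le_left (by positivity) D21)
      calc L * (r * x ^ 2) ≤ L * (r * S) := by gcongr
        _ ≤ _ := by gcongr
    have t3 : 600000 * D ^ 2 * L ^ 4 * (r * S) ≤ r * (r * S) := by gcongr
    have t4 : 0 ≤ D ^ 2 * L ^ 4 * (r * S) := by positivity
    linarith
  have := le_of_mul_le_mul_left this (by positivity)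
  linarith

lemma caseB {K a r s σ L : ℝ} {w w1 w2 φ φ1 φ2 f : ℝ → ℂ}
    (hσ : 0 < σ) (H : NOS (σ ^ 4) K a s w w1 w2 φ φ1 φ2 f) (hr : 2 ≤ r)
    (hb1 : σ * r ^ 2 ≤ 1) (ha : a = (σ * r ^ 2) ^ 2) (hLe : L = 32 * log r) (hL : 1 ≤ L)
    (hrL : 600000 * 13002 ^ 2 * L ^ 4 ≤ r) :
    (σ ^ 2 * l2 w) ^ 2 ≤ 20000 * l2 f ^ 2 ∧ σ ^ 3 * l1 w ^ 2 ≤ 20001 * l2 f ^ 2 := by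
  have cw := H.cw
  obtain ⟨b, hb⟩ : ∃ b, b = σ * r ^ 2 := ⟨_, rfl⟩
  obtain ⟨h, hh⟩ : ∃ h, h = σ / r := ⟨_, rfl⟩
  rw [← hb] at hb1 ha
  have r0 : 0 < r := by linarith
  have r2 : 4 ≤ r ^ 2 := by nlinarith
  have r3 : 8 ≤ r ^ 3 := by nlinarith
  have b0 : 0 < b := by rw [hb]; positivity
  have h0 : 0 < h := by rw [hh]; positivity
  have hhb : 4 * h ≤ b := by
    rw [hb, hh, mul_div_assoc', div_le_iff₀ r0]
    have := mul_le_mul_of_nonneg_left r3 hσ.le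
    linarith
  have hJ : ∫ y in (-1:ℝ)..1, (|b ^ 2 - y ^ 2| + b * h)⁻¹ ≤ L / b := by
    have := J_bd hr b0 hb1
    rw [hLe]
    have e : b / r ^ 3 = h := by rw [hb, hh]; field_simp
    rwa [e] at this
  obtain ⟨E, hE⟩ : ∃ E, E = ∫ y in (-1:ℝ)..1, |a - y ^ 2| * ‖w y‖ ^ 2 := ⟨_, rfl⟩
  have E0 : 0 ≤ E := by
    rw [hE]; exact intervalIntegral.integral_nonneg (by norm_num) (fun y _ => by positivity)
  have hV : ∫ y in (-1:ℝ)..1, (a - y ^ 2) * ‖w y‖ ^ 2 ≤ E := by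
    rw [hE]
    refine int_mono (by norm_num) (by fun_prop) (by fun_prop) (fun y _ => ?_)
    gcongr; exact le_abs_self _
  have W0 := l2_nonneg w
  have W10 := l2_nonneg w1
  have F0 := l2_nonneg f
  have N0 := l1_nonneg w
  obtain ⟨M, hM⟩ : ∃ M, M = 300 * (h ^ 2 * l2 f ^ 2 + (σ ^ 4) ^ 2 * l2 w1 ^ 2 + 
      b ^ 2 * h ^ 4 * l2 w ^ 2 + h ^ 4 * (E + l2 f * l2 w)) / h ^ 3 := ⟨_, rfl⟩
  have M0 : 0 ≤ M := by rw [hM]; positivity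
  have hm2 : √M ^ 2 = M := Real.sq_sqrt M0
  have hmr : ∀ y ∈ Set.Icc (b - h) b, ‖φ y‖ ≤ √M := by
    intro y hy
    apply Real.le_sqrt_of_sq_le
    rw [hM, le_div_iff₀ (by positivity), mul_comm]
    refine (H.mbound hb1 ha h0 (by linarith) hy).trans ?_
    gcongr
  have hml : ∀ y ∈ Set.Icc (b - h) b, ‖φ (-y)‖ ≤ √M := by
    intro y hy
    apply Real.le_sqrt_of_sq_le
    rw [hM, le_div_iff₀ (by positivity), mul_comm]
    have e : ∫ y in (-1:ℝ)..1, (a - y ^ 2) * ‖w (-y)‖ ^ 2 = 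
        ∫ y in (-1:ℝ)..1, (a - y ^ 2) * ‖w y‖ ^ 2 := by
      have := intervalIntegral.integral_comp_neg (a := -1) (b := 1) 
        (fun y : ℝ => (a - y ^ 2) * ‖w y‖ ^ 2)
      simpa using this
    have := H.flip.mbound hb1 ha h0 (by linarith) hy
    rw [e, l2_flip, l2_flip, l2_flip'] at this
    refine this.trans ?_
    gcongr
  have q5 := E2_bound H hb1 ha h0 hhb (Real.sqrt_nonneg M) hL hJ hmr hml rfl
  have q2 := B2 H hb1 ha hσ (by rw [hb]; nlinarith)
  have q4 := B4 H ha h0 b0 hJ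
  have q1 := H.energy_re
  rw [← hE] at q5 q2 q4
  have e1 : (σ ^ 3 * l2 w1) ^ 2 ≤ l2 f * (σ ^ 2 * l2 w) := by
    have p : 0 ≤ σ ^ 4 * (K ^ 2 * l2 w ^ 2) := by positivity
    have := mul_le_mul_of_nonneg_left (show σ ^ 4 * l2 w1 ^ 2 ≤ l2 f * l2 w by linarith)
      (sq_nonneg σ)
    linarith
  have e2 : r ^ 2 * (σ ^ 2 * l2 w) ^ 2 ≤ 3 * (σ ^ 2 * E) + 
      8 * r ^ 2 * ((σ ^ 2 * l2 w) * (σ ^ 3 * l2 w1)) := by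
    have := mul_le_mul_of_nonneg_left q2 (sq_nonneg σ)
    rw [hb] at this
    linarith
  have e3 : σ * M ≤ 300 * (l2 f ^ 2 * r + r ^ 3 * (σ ^ 3 * l2 w1) ^ 2 + 
      r ^ 3 * (σ ^ 2 * l2 w) ^ 2 + ((σ ^ 2 * E) + l2 f * (σ ^ 2 * l2 w)) / r) := by
    apply le_of_eq
    rw [hM, hb, hh]
    field_simp
  have e4 : r ^ 2 * (σ ^ 3 * l1 w ^ 2) ≤ L * (σ ^ 2 * E + r * (σ ^ 2 * l2 w) ^ 2) := by
    have := mul_le_mul_of_nonneg_left q4 (by positivity : 0 ≤ r ^ 2 * σ ^ 3)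
    refine le_trans (le_of_eq (by ring)) (this.trans (le_of_eq ?_))
    rw [hb, hh]
    field_simp
  have e5 : σ ^ 2 * E ≤ 13002 * (L * (l2 f * (σ ^ 2 * l2 w) + 
      4 * r * ((σ ^ 2 * l2 w) * (σ ^ 3 * l2 w1)) + 
      2 * (σ ^ 2 * √M * l1 w) + 4 * r * (σ ^ 2 * l2 w) ^ 2) + σ * M / r ^ 2) := by
    have := mul_le_mul_of_nonneg_left q5 (sq_nonneg σ)
    refine this.trans (le_of_eq ?_)
    rw [hm2, hb, hh]
    field_simp
  refine os_closure (by norm_num) (by linarith) hL hrL F0 (by positivity) (by positivity) 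
    (by positivity) (by positivity) e1 e2 e3 e4 e5 ?_
  rw [mul_pow, mul_pow, hm2]; ring

lemma exists_r0 : ∃ r0 : ℝ, 2 ≤ r0 ∧ ∀ r, r0 ≤ r → 1 ≤ 32 * log r ∧
    600000 * 13002 ^ 2 * (32 * log r) ^ 4 ≤ r := by
  have h := (isLittleO_pow_log_id_atTop (n := 4)).bound
    (by positivity : (0:ℝ) < 1 / (600000 * 13002 ^ 2 * 32 ^ 4))
  obtain ⟨R, hR⟩ := Filter.eventually_atTop.1 h
  refine ⟨max R 3, le_trans (by norm_num) (le_max_right _ _), fun r hr => ?_⟩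
  have r3 : 3 ≤ r := (le_max_right _ _).trans hr
  have l1 : 1 ≤ log r := by
    rw [Real.le_log_iff_exp_le (by linarith)]
    linarith [Real.exp_one_lt_d9]
  refine ⟨by linarith, ?_⟩
  have := hR r ((le_max_left _ _).trans hr)
  simp only [id, Real.norm_eq_abs] at this
  rw [abs_of_nonneg (by positivity), abs_of_nonneg (by linarith), div_mul_eq_mul_div,
    le_div_iff₀ (by positivity)] at this
  linarith

lemma os_core : ∃ C : ℝ, 0 < C ∧ ∀ {K a s σ : ℝ} {w w1 w2 φ φ1 φ2 f : ℝ → ℂ}, 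
    0 < σ → σ < 1 → NOS (σ ^ 4) K a s w w1 w2 φ φ1 φ2 f →
    σ ^ 2 * l2 w ≤ C * l2 f ∧ σ ^ 3 * l1 w ^ 2 ≤ C ^ 2 * l2 f ^ 2 := by
  obtain ⟨r0, hr0, hr⟩ := exists_r0
  obtain ⟨Γ, hΓ⟩ : ∃ Γ, Γ = r0 ^ 4 := ⟨_, rfl⟩
  have Γ1 : 1 ≤ Γ := by rw [hΓ]; exact one_le_pow₀ (by linarith)
  obtain ⟨C, hC⟩ : ∃ C, C = (4 * (Γ + 1) * (4 * Γ + 2) ^ 2 + 4 * (4 * Γ + 2)) + 1000 := ⟨_, rfl⟩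
  have C1000 : 1000 ≤ C := by rw [hC]; have : 0 ≤ Γ := by linarith
                              linarith [show 0 ≤ (4 * (Γ + 1) * (4 * Γ + 2) ^ 2 + 4 * (4 * Γ + 2)) by positivity]
  have C1 : (4 * Γ + 2) ≤ C := by
    have : 0 ≤ 4 * (Γ + 1) * (4 * Γ + 2) ^ 2 := by positivity
    linarith
  have C2 : (4 * (Γ + 1) * (4 * Γ + 2) ^ 2 + 4 * (4 * Γ + 2)) ≤ C ^ 2 := by
    have : C ≤ C ^ 2 := le_self_pow₀ (by linarith) (by norm_num)
    linarith
  have C3 : 1000 ^ 2 ≤ C ^ 2 := by gcongr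
  refine ⟨C, by linarith, fun {K a s σ w w1 w2 φ φ1 φ2 f} hσ hσ1 H => ?_⟩
  have F0 := l2_nonneg f
  have F20 := sq_nonneg (l2 f)
  rcases le_total a (Γ * σ ^ 2) with hA | hB
  · obtain ⟨x, y⟩ := caseA Γ1 hσ H hA
    exact ⟨x.trans (by gcongr), y.trans (by gcongr)⟩
  rcases lt_or_ge 1 a with hC | hC
  · obtain ⟨x, y⟩ := caseC hσ hσ1 H hC
    refine ⟨x.trans ?_, y.trans ?_⟩
    · gcongr; linarith
    · gcongr; linarith
  have a0 : 0 < a := lt_of_lt_of_le (by positivity) hB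
  have hs : √(√a / σ) ^ 2 = √a / σ := Real.sq_sqrt (by positivity)
  have hb : σ * √(√a / σ) ^ 2 = √a := by rw [hs]; field_simp
  have hrr : r0 ≤ √(√a / σ) := by
    apply Real.le_sqrt_of_sq_le
    rw [le_div_iff₀ hσ]
    apply Real.le_sqrt_of_sq_le
    rw [hΓ] at hB; linarith
  obtain ⟨p, q⟩ := hr _ hrr
  obtain ⟨x, y⟩ := caseB hσ H (hr0.trans hrr) (by rw [hb]; exact Real.sqrt_le_one.2 hC) 
    (by rw [hb, Real.sq_sqrt a0.le]) rfl p q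
  constructor
  · refine le_of_sq_le_sq ?_ (by positivity)
    refine x.trans ?_
    rw [mul_pow]; gcongr; linarith
  · refine y.trans ?_
    gcongr; linarith

lemma NOS.u_bound {ε K a s : ℝ} {w w1 w2 φ φ1 φ2 f : ℝ → ℂ} 
    (H : NOS ε K a s w w1 w2 φ φ1 φ2 f) :
    √K * √((∫ y in (-1:ℝ)..1, ‖φ1 y‖ ^ 2) + K ^ 2 * ∫ y in (-1:ℝ)..1, ‖φ y‖ ^ 2) ≤ l1 w := by
  have cw := H.cw
  have cp := H.cp
  have cp1 := H.cp1
  have hK := H.hK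
  have N0 := l1_nonneg w
  have h2 : (-1:ℝ) ≤ 1 := by norm_num
  obtain ⟨U, hU⟩ : ∃ U, U = (∫ y in (-1:ℝ)..1, ‖φ1 y‖ ^ 2) + K ^ 2 * ∫ y in (-1:ℝ)..1, ‖φ y‖ ^ 2 :=
    ⟨_, rfl⟩
  rw [← hU]
  have hU' : U = l2 φ1 ^ 2 + K ^ 2 * l2 φ ^ 2 := by rw [hU, l2_sq, l2_sq]
  have U0 : 0 ≤ U := by rw [hU']; positivity
  have hE : ∫ y in (-1:ℝ)..1, (‖φ1 y‖ ^ 2 + K ^ 2 * ‖φ y‖ ^ 2) = U := by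
    rw [intervalIntegral.integral_add, intervalIntegral.integral_const_mul, hU]
    · exact (by fun_prop : Continuous fun y => ‖φ1 y‖ ^ 2).intervalIntegrable _ _
    · exact (by fun_prop : Continuous fun y => K ^ 2 * ‖φ y‖ ^ 2).intervalIntegrable _ _
  have sup : ∀ y ∈ Set.Icc (-1:ℝ) 1, ‖φ y‖ ≤ √(U / K) := by
    intro y hy
    apply Real.le_sqrt_of_sq_le
    rw [le_div_iff₀ (by linarith)]
    have a1 := sq_norm_diff H.hp cp1 hy (Set.left_mem_Icc.2 h2)
    rw [H.pa] at a1
    have a2 := l2_prod cp cp1 le_rfl h2 le_rfl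
    have a3 : ‖φ y‖ ^ 2 ≤ 2 * (l2 φ * l2 φ1) := by
      simp only [norm_zero] at a1
      linarith
    have a4 := mul_le_mul_of_nonneg_right a3 (by linarith : 0 ≤ K)
    linarith [sq_nonneg (l2 φ1 - K * l2 φ)]
  have E := dirichlet_energy h2 H.hp H.hp1 H.cp2 H.ell H.pa H.pb
  rw [hE] at E
  have B : U ≤ √(U / K) * l1 w := by
    have : U = ∫ y in (-1:ℝ)..1, -((φ y).re * (w y).re + (φ y).im * (w y).im) := by
      rw [intervalIntegral.integral_neg, E, neg_neg]
    refine this.trans_le ?_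
    unfold l1
    rw [← intervalIntegral.integral_const_mul]
    refine int_mono h2 (by fun_prop) (by fun_prop) (fun y hy => ?_)
    have i : |(φ y).re * (w y).re + (φ y).im * (w y).im| ≤ ‖φ y‖ * ‖w y‖ := by
      have := Complex.abs_re_le_norm (φ y * (starRingEnd ℂ) (w y))
      simpa using this
    have := (abs_le.1 i).1
    have := mul_le_mul_of_nonneg_right (sup y hy) (norm_nonneg (w y))
    linarith
  rw [← Real.sqrt_mul (by linarith)]
  apply Real.sqrt_le_iff.2 ⟨N0, ?_⟩
  rcases U0.eq_or_lt with h | h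
  · rw [← h]; simp; positivity
  · have B2 : U ^ 2 ≤ (√(U / K) * l1 w) ^ 2 := by gcongr
    rw [mul_pow, Real.sq_sqrt (by positivity), div_mul_eq_mul_div, 
      le_div_iff₀ (by linarith)] at B2
    have : U * (K * U) ≤ U * l1 w ^ 2 := by linarith
    exact le_of_mul_le_mul_left this h

lemma hd2 {g : ℝ → ℂ} (h : ContDiff ℝ 2 g) : (∀ y, HasDerivAt g (deriv g y) y) ∧ 
    (∀ y, HasDerivAt (deriv g) (deriv (deriv g) y) y) ∧ Continuous (deriv (deriv g)) := by
  have h1 : ContDiff ℝ 1 (deriv g) := by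
    have : ContDiff ℝ (1 + 1) g := by
      convert h using 1; norm_num
    exact (contDiff_succ_iff_deriv.1 this).2.2
  refine ⟨fun y => (h.differentiable (by norm_num) y).hasDerivAt, 
    fun y => (h1.differentiable (by norm_num) y).hasDerivAt, h1.continuous_deriv le_rfl⟩

lemma rpow_aux {ν k σ : ℝ} (hk : 0 < k) (hσ : 0 < σ) (h : ν = k * σ ^ 4) (p q : ℝ) 
    (hpq : p + q = 1) : ν ^ p * k ^ q = k * σ ^ (4 * p) := by
  rw [h, Real.mul_rpow hk.le (by positivity), mul_right_comm, ← Real.rpow_add hk, hpq,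
    Real.rpow_one, Real.rpow_mul hσ.le]
  norm_cast

/-- **Resolvent estimate with Navier-slip boundary condition, `F ∈ L²`**
(Proposition 2.1): for all `0 < ν ≤ ν₀`, `λ ∈ ℝ`, `|k₁| ≥ 1`, `F ∈ L²` and
every solution `w` of the Orr–Sommerfeld problem,
`ν^{3/8}|k₁|^{5/8}(‖w‖_{L¹} + |k|^{1/2}‖u‖_{L²}) + ν^{3/4}|k₁|^{1/4}‖w'‖_{L²}
  + ν^{1/2}|k₁|^{1/2}‖w‖_{L²} ≤ C‖F‖_{L²}`. -/
theorem OS_slip_resolvent_L2 :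
    ∃ ν₀ C : ℝ, 0 < ν₀ ∧ ν₀ < 1 ∧ 0 < C ∧
      ∀ (ν lam : ℝ) (k₁ k₃ : ℤ) (w φ F : ℝ → ℂ),
        0 < ν → ν ≤ ν₀ → 1 ≤ |k₁| →
        IntervalIntegrable (fun y => ‖F y‖ ^ 2) MeasureTheory.volume (-1) 1 →
        OSslip ν k₁ k₃ (lam : ℂ) w φ F →
        ν ^ ((3:ℝ)/8) * |(k₁ : ℝ)| ^ ((5:ℝ)/8) *
            (l1 w + Real.sqrt (kabs k₁ k₃) * hk k₁ k₃ φ)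
          + ν ^ ((3:ℝ)/4) * |(k₁ : ℝ)| ^ ((1:ℝ)/4) * l2 (deriv w)
          + ν ^ ((1:ℝ)/2) * |(k₁ : ℝ)| ^ ((1:ℝ)/2) * l2 w
          ≤ C * l2 F := by
  obtain ⟨C, C0, hC⟩ := os_core
  refine ⟨1 / 2, 4 * C + 1, by norm_num, by norm_num, by linarith, ?_⟩
  intro ν lam k₁ k₃ w φ F hν hν1 hk1 _ hOS
  obtain ⟨cdw, cdp, heq, hell, pa, pb, pa2, pb2⟩ := hOS
  obtain ⟨k, hkk⟩ : ∃ k, k = |(k₁ : ℝ)| := ⟨_, rfl⟩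
  have k1 : 1 ≤ k := by rw [hkk]; exact_mod_cast hk1
  have k0 : 0 < k := by linarith
  obtain ⟨s, hs2, hks⟩ : ∃ s : ℝ, s ^ 2 = 1 ∧ (k₁ : ℝ) = k * s := by
    rcases abs_choice (k₁ : ℝ) with h | h
    · exact ⟨1, by norm_num, by rw [hkk, h]; ring⟩
    · exact ⟨-1, by norm_num, by rw [hkk, h]; ring⟩
  obtain ⟨σ, hσe⟩ : ∃ σ, σ = (ν / k) ^ ((1:ℝ) / 4) := ⟨_, rfl⟩
  have σ0 : 0 < σ := by rw [hσe]; positivity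
  have σ4 : σ ^ 4 = ν / k := by
    rw [hσe, ← Real.rpow_natCast, ← Real.rpow_mul (by positivity)]; norm_num
  have σ1 : σ < 1 := by
    rw [hσe]
    apply Real.rpow_lt_one (by positivity) _ (by norm_num)
    rw [div_lt_one k0]; linarith
  have hνk : ν = k * σ ^ 4 := by rw [σ4]; field_simp
  obtain ⟨w_1, w_2, w_3⟩ := hd2 cdw
  obtain ⟨p_1, p_2, p_3⟩ := hd2 cdp
  have K1 : 1 ≤ kabs k₁ k₃ := by
    unfold kabs
    rw [Real.one_le_sqrt]
    have : 1 ≤ |(k₁ : ℝ)| ^ 2 := one_le_pow₀ (by rw [← hkk]; exact k1)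
    rw [sq_abs] at this
    linarith [sq_nonneg (k₃ : ℝ)]
  have H : NOS (σ ^ 4) (kabs k₁ k₃) (1 - lam) s w (deriv w) (deriv (deriv w)) φ (deriv φ) 
      (deriv (deriv φ)) (fun y => -((σ ^ 4 : ℝ) : ℂ) * (deriv (deriv w) y - 
        ((kabs k₁ k₃ : ℝ) : ℂ) ^ 2 * w y) +
        Complex.I * (s:ℂ) * ((((1 - lam : ℝ) : ℂ) - (y:ℂ) ^ 2) * w y + 2 * φ y)) :=
    { hε := by positivity
      hK := K1
      hs := hs2
      hw := w_1
      hw1 := w_2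
      cw2 := w_3
      hp := p_1
      hp1 := p_2
      cp2 := p_3
      cf := by
        have := cdw.continuous
        have := cdp.continuous
        fun_prop
      eq := fun y _ => rfl
      ell := hell
      pa := pa
      pb := pb
      wa := by rw [← hell (-1) (by simp), pa, pa2]; simp
      wb := by rw [← hell 1 (by simp), pb, pb2]; simp }
  obtain ⟨f, hf⟩ : ∃ f : ℝ → ℂ, f = (fun y => -((σ ^ 4 : ℝ) : ℂ) * (deriv (deriv w) y - 
        ((kabs k₁ k₃ : ℝ) : ℂ) ^ 2 * w y) +
        Complex.I * (s:ℂ) * ((((1 - lam : ℝ) : ℂ) - (y:ℂ) ^ 2) * w y + 2 * φ y)) := ⟨_, rfl⟩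
  rw [← hf] at H
  have hF : l2 F = k * l2 f := by
    have e : ∫ y in (-1:ℝ)..1, ‖F y‖ ^ 2 = ∫ y in (-1:ℝ)..1, k ^ 2 * ‖f y‖ ^ 2 := by
      apply intervalIntegral.integral_congr
      intro y hy
      rw [Set.uIcc_of_le (by norm_num)] at hy
      have : F y = (k : ℂ) * f y := by
        have c1 : (k₁ : ℂ) = (k : ℂ) * (s : ℂ) := by exact_mod_cast congrArg (fun x : ℝ => (x : ℂ)) hks
        rw [← heq y hy, hf, hνk, c1]
        push_cast
        ring
      simp only [this, norm_mul, Complex.norm_real, Real.norm_eq_abs, abs_of_pos k0]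
      ring
    unfold l2
    rw [e, intervalIntegral.integral_const_mul, Real.sqrt_mul (by positivity), 
      Real.sqrt_sq k0.le]
  obtain ⟨hx, hn⟩ := hC σ0 σ1 H
  have hu := H.u_bound
  have hre := H.energy_re
  have W0 := l2_nonneg w
  have W10 := l2_nonneg (deriv w)
  have F0 := l2_nonneg f
  have N0 := l1_nonneg w
  have hu' : √(kabs k₁ k₃) * hk k₁ k₃ φ ≤ l1 w := hu
  have z1 : σ ^ ((3:ℝ) / 2) * l1 w ≤ C * l2 f := by
    refine le_of_sq_le_sq ?_ (by positivity)
    have : (σ ^ ((3:ℝ) / 2)) ^ 2 = σ ^ 3 := by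
      rw [← Real.rpow_natCast, ← Real.rpow_mul σ0.le, ← Real.rpow_natCast]; norm_num
    rw [mul_pow, mul_pow, this]; exact hn
  have z2 : σ ^ 3 * l2 (deriv w) ≤ (C + 1) * l2 f := by
    refine le_of_sq_le_sq ?_ (by positivity)
    have p : 0 ≤ σ ^ 4 * (kabs k₁ k₃ ^ 2 * l2 w ^ 2) := by positivity
    have t1 := mul_le_mul_of_nonneg_left 
      (show σ ^ 4 * l2 (deriv w) ^ 2 ≤ l2 f * l2 w by linarith) (sq_nonneg σ)
    have t2 := mul_le_mul_of_nonneg_left hx F0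
    have t3 : 0 ≤ (C ^ 2 + C + 1) * l2 f ^ 2 := by positivity
    linarith
  have y1 := rpow_aux k0 σ0 hνk (3 / 8) (5 / 8) (by norm_num)
  have y2 := rpow_aux k0 σ0 hνk (3 / 4) (1 / 4) (by norm_num)
  have y3 := rpow_aux k0 σ0 hνk (1 / 2) (1 / 2) (by norm_num)
  rw [← hkk, y1, y2, y3, hF]
  rw [show 4 * ((3:ℝ) / 8) = 3 / 2 by norm_num, show 4 * ((3:ℝ) / 4) = (3 : ℕ) by norm_num,
    show 4 * ((1:ℝ) / 2) = (2 : ℕ) by norm_num, Real.rpow_natCast, Real.rpow_natCast]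
  have S0 : 0 ≤ σ ^ ((3:ℝ) / 2) := by positivity
  have z3 := mul_le_mul_of_nonneg_left hu' S0
  have g1 : σ ^ ((3:ℝ) / 2) * (l1 w + √(kabs k₁ k₃) * hk k₁ k₃ φ) + σ ^ 3 * l2 (deriv w) + 
      σ ^ 2 * l2 w ≤ (4 * C + 1) * l2 f := by linarith
  have := mul_le_mul_of_nonneg_left g1 k0.le
  linarith

end
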